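/- arXiv:2604.13486 — 4 statements merged into one kernel-verified Lean document; each statement's English description precedes it below -/
import Mathlib

section
/- Let d ≥ 2 and let A, B ∈ M_d(ℂ). If U is a Haar-random element of the unitary group U(d), then E[(U†⊗U†)(A⊗B)(U⊗U)] = [(d·Tr(AB) − Tr(A)·Tr(B)) / (d(d²−1))]·𝔽 + [(d·Tr(A)·Tr(B) − Tr(AB)) / (d(d²−1))]·𝕀, where 𝕀 is the identity on ℂ^d⊗ℂ^d and 𝔽 is the swap operator on ℂ^d⊗ℂ^d. -/
open Matrix MeasureTheory
open scoped Kronecker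

noncomputable section

/-- The swap operator `𝔽` on `ℂ^d ⊗ ℂ^d`, `𝔽(u⊗v) = v⊗u`. -/
def swapOp (d : ℕ) : Matrix (Fin d × Fin d) (Fin d × Fin d) ℂ :=
  fun p q => if p.1 = q.2 ∧ p.2 = q.1 then 1 else 0

/-!
The twirl `E[(U ⊗ U)ᴴ X (U ⊗ U)]` is unchanged under conjugation by any `V ⊗ V`, because a
left-invariant probability measure on a group is also right-invariant. So it lies in the commutant
of the operators `V ⊗ V`, which is spanned by the identity and the swap `𝔽`, and the two
coefficients are read off from the traces against `1` and `𝔽`, both preserved by the twirl.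

For the commutant: if `P` is an orthogonal projection, `V_z = 1 - z P` is unitary for `z = 1 ± i`,
and adding the two operators `V_z ⊗ V_z` leaves `2 (1 - (P ⊗ 1 + 1 ⊗ P))`. Projections span the
matrix algebra, so an operator `M` of the commutant commutes with every `A ⊗ 1 + 1 ⊗ A`, hence,
taking products, with every `A ⊗ B + B ⊗ A`. For matrix units `A`, `B` this determines all columns
of `M` from a single one.
-/

section SwapMatrix

variable (n R : Type*) [DecidableEq n] [CommSemiring R]

/-- The swap operator `u ⊗ v ↦ v ⊗ u` on `Rⁿ ⊗ Rⁿ`, as the permutation matrix of the exchange of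
the two coordinates of `n × n`. -/
def swapMatrix : Matrix (n × n) (n × n) R :=
  Equiv.Perm.permMatrix R (Equiv.prodComm n n)

variable {n R}

lemma swapMatrix_apply (p q : n × n) :
    swapMatrix n R p q = if p.1 = q.2 ∧ p.2 = q.1 then 1 else 0 := by
  simp [swapMatrix, PEquiv.toMatrix_apply, Prod.ext_iff, and_comm, eq_comm]

variable [Fintype n]

lemma swapMatrix_mul (M : Matrix (n × n) (n × n) R) :
    swapMatrix n R * M = M.submatrix Prod.swap id :=
  PEquiv.toMatrix_toPEquiv_mul _ _

lemma mul_swapMatrix (M : Matrix (n × n) (n × n) R) :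
    M * swapMatrix n R = M.submatrix id Prod.swap :=
  PEquiv.mul_toMatrix_toPEquiv _ _

@[simp]
lemma swapMatrix_mul_self : swapMatrix n R * swapMatrix n R = 1 := by
  ext p q
  simp [swapMatrix_mul, swapMatrix_apply, one_apply, Prod.ext_iff, and_comm]

lemma swapMatrix_mul_kronecker (A B : Matrix n n R) :
    swapMatrix n R * (A ⊗ₖ B) = (B ⊗ₖ A) * swapMatrix n R := by
  ext p q
  simp [swapMatrix_mul, mul_swapMatrix, mul_comm]

lemma trace_swapMatrix_mul_kronecker (A B : Matrix n n R) :
    (swapMatrix n R * (A ⊗ₖ B)).trace = (A * B).trace := by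
  simp [swapMatrix_mul, trace, mul_apply, Fintype.sum_prod_type_right]

lemma trace_swapMatrix : (swapMatrix n R).trace = Fintype.card n := by
  simpa using trace_swapMatrix_mul_kronecker (1 : Matrix n n R) 1

end SwapMatrix

lemma swapMatrix_fin_eq_swapOp (d : ℕ) : swapMatrix (Fin d) ℂ = swapOp d := by
  ext p q
  exact swapMatrix_apply p q

lemma span_isStarProjection_eq_top (n : Type*) [Fintype n] :
    Submodule.span ℂ {P : Matrix n n ℂ | IsStarProjection P} = ⊤ := by
  classical
  rw [eq_top_iff, ← span_selfAdjoint, Submodule.span_le]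
  intro A hA
  have hA : A.IsHermitian := hA
  have hdiag : diagonal (RCLike.ofReal ∘ hA.eigenvalues) =
      ∑ i, (hA.eigenvalues i : ℂ) • (single i i 1 : Matrix n n ℂ) := by
    ext i j
    simp [Matrix.sum_apply, diagonal_apply, single_apply, ite_and]
  rw [SetLike.mem_coe, hA.spectral_theorem, hdiag, map_sum]
  refine Submodule.sum_mem _ fun i _ ↦ ?_
  rw [map_smul]
  have hproj : IsStarProjection (single i i 1 : Matrix n n ℂ) :=
    ⟨by simp [IsIdempotentElem], by simp [IsSelfAdjoint, star_eq_conjTranspose]⟩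
  exact Submodule.smul_mem _ _ (Submodule.subset_span (hproj.map _))

section Commutant

variable {n R : Type*} [DecidableEq n] [CommRing R]

/-- The operator `A ⊗ 1 + 1 ⊗ A`, as a linear function of `A`: the derivative of `A ↦ A ⊗ A` at
the identity. -/
def kroneckerSum : Matrix n n R →ₗ[R] Matrix (n × n) (n × n) R where
  toFun A := A ⊗ₖ 1 + 1 ⊗ₖ A
  map_add' A B := by rw [add_kronecker, kronecker_add]; abel
  map_smul' r A := by rw [smul_kronecker, kronecker_smul, RingHom.id_apply, smul_add]

lemma kroneckerSum_apply (A : Matrix n n R) : kroneckerSum A = A ⊗ₖ 1 + 1 ⊗ₖ A := rfl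

lemma one_sub_smul_kronecker_self (P : Matrix n n R) (z : R) :
    (1 - z • P) ⊗ₖ (1 - z • P) = 1 - z • kroneckerSum P + z ^ 2 • (P ⊗ₖ P) := by
  simp only [sub_eq_add_neg, ← neg_smul, kroneckerSum_apply, add_kronecker, kronecker_add,
    smul_kronecker, kronecker_smul, one_kronecker_one]
  module

variable [Fintype n]

lemma kroneckerSum_mul_kroneckerSum (A B : Matrix n n R) :
    kroneckerSum A * kroneckerSum B = kroneckerSum (A * B) + (A ⊗ₖ B + B ⊗ₖ A) := by
  simp only [kroneckerSum_apply, add_mul, mul_add, ← mul_kronecker_mul, one_mul, mul_one]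
  abel

lemma commute_kronecker_add_kronecker {M : Matrix (n × n) (n × n) R}
    (hM : ∀ A : Matrix n n R, Commute M (kroneckerSum A)) (A B : Matrix n n R) :
    Commute M (A ⊗ₖ B + B ⊗ₖ A) := by
  rw [← add_sub_cancel_left (kroneckerSum (A * B)) (A ⊗ₖ B + B ⊗ₖ A),
    ← kroneckerSum_mul_kroneckerSum]
  exact ((hM A).mul_right (hM B)).sub_right (hM (A * B))

lemma exists_eq_smul_one_add_smul_swapMatrix [Nontrivial n] {M : Matrix (n × n) (n × n) R}
    (hM : ∀ A B : Matrix n n R, Commute M (A ⊗ₖ B + B ⊗ₖ A)) :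
    ∃ α β : R, M = α • 1 + β • swapMatrix n R := by
  obtain ⟨a, c, hac⟩ := exists_pair_ne n
  refine ⟨M (a, c) (a, c), M (c, a) (a, c), ?_⟩
  ext ⟨i, j⟩ ⟨x, y⟩
  -- Column `(x, y)` of `M` appears as column `(a, c)` of `M * T`; since `a ≠ c`, the two terms of
  -- `T` do not interfere.
  let T : Matrix (n × n) (n × n) R := single (x, y) (a, c) 1 + single (y, x) (c, a) 1
  have hT : Commute M T := by
    simpa [T, single_kronecker_single] using hM (single x a 1) (single y c 1)
  have hMT : (M * T) (i, j) (a, c) = M (i, j) (x, y) := by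
    simp [T, mul_add, hac, mul_single_apply_of_ne]
  have hTM : (T * M) (i, j) (a, c) =
      (M (a, c) (a, c) • 1 + M (c, a) (a, c) • swapMatrix n R) (i, j) (x, y) := by
    simp [T, add_mul, swapMatrix_apply, one_apply, mul_apply, single_apply, ite_and,
      Finset.sum_add_distrib, eq_comm (a := x), eq_comm (a := y)]
  rw [← hMT, hT.eq, hTM]

lemma one_sub_smul_mem_unitary {S : Type*} [StarRing R] [Ring S] [StarRing S] [Algebra R S]
    [StarModule R S] {p : S} (hp : IsStarProjection p) {z : R}
    (hz : z + star z = z * star z) : 1 - z • p ∈ unitary S := by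
  have hmul (z w : R) (hzw : z + w = z * w) : (1 - z • p) * (1 - w • p) = 1 :=
    calc
      (1 - z • p) * (1 - w • p) = 1 - (z + w - z * w) • p := by
        simp only [sub_mul, mul_sub, one_mul, mul_one, smul_mul_smul_comm, hp.isIdempotentElem.eq]
        module
      _ = 1 := by rw [hzw, sub_self, zero_smul, sub_zero]
  rw [Unitary.mem_iff, star_sub, star_one, star_smul, hp.isSelfAdjoint.star_eq]
  exact ⟨hmul _ _ (by rw [add_comm, hz, mul_comm]), hmul _ _ hz⟩

-- `z ^ 2 • (P ⊗ₖ P)` cancels between `z = 1 + I` and `z = 1 - I`, whose squares are opposite.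
lemma commute_kroneckerSum_of_isStarProjection {M : Matrix (n × n) (n × n) ℂ}
    (hM : ∀ U ∈ unitaryGroup n ℂ, Commute M (U ⊗ₖ U)) {P : Matrix n n ℂ}
    (hP : IsStarProjection P) : Commute M (kroneckerSum P) := by
  let V (z : ℂ) : Matrix n n ℂ := 1 - z • P
  have hV (z : ℂ) (hz : z + star z = z * star z) : Commute M (V z ⊗ₖ V z) :=
    hM _ (one_sub_smul_mem_unitary hP hz)
  have hsum : V (1 + Complex.I) ⊗ₖ V (1 + Complex.I) + V (1 - Complex.I) ⊗ₖ V (1 - Complex.I) =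
      (2 : ℂ) • (1 - kroneckerSum P) := by
    have hsq : (1 + Complex.I) ^ 2 + (1 - Complex.I) ^ 2 = 0 := by
      linear_combination 2 * Complex.I_sq
    simp only [V, one_sub_smul_kronecker_self]
    linear_combination (norm := module) hsq • (P ⊗ₖ P)
  have hcomm : Commute M (1 - kroneckerSum P) := by
    rw [← Commute.smul_right_iff₀ (two_ne_zero (α := ℂ)), ← hsum]
    refine (hV _ ?_).add_right (hV _ ?_) <;>
      simp only [star_add, star_sub, star_one, Complex.star_def, Complex.conj_I] <;>
      linear_combination Complex.I_sq
  simpa using (Commute.one_right M).sub_right hcomm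

lemma exists_eq_smul_one_add_smul_swapMatrix_of_commute_unitary [Nontrivial n]
    {M : Matrix (n × n) (n × n) ℂ} (hM : ∀ U ∈ unitaryGroup n ℂ, Commute M (U ⊗ₖ U)) :
    ∃ α β : ℂ, M = α • 1 + β • swapMatrix n ℂ := by
  refine exists_eq_smul_one_add_smul_swapMatrix (commute_kronecker_add_kronecker fun A ↦ ?_)
  have hA : A ∈ Submodule.span ℂ {P : Matrix n n ℂ | IsStarProjection P} := by
    simp [span_isStarProjection_eq_top]
  induction hA using Submodule.span_induction with
  | mem P hP => exact commute_kroneckerSum_of_isStarProjection hM hP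
  | zero => simp
  | add A B _ _ hA hB => simpa using hA.add_right hB
  | smul c A _ hA => simpa using hA.smul_right c

end Commutant

section Haar

variable {G : Type*} [Group G] [MeasurableSpace G] [MeasurableMul₂ G] [MeasurableInv G]
  (μ : Measure G) [IsProbabilityMeasure μ] [μ.IsMulLeftInvariant]

-- `(x, y) ↦ (y * x, x⁻¹)` preserves `μ.prod μ`; compare second marginals.
lemma isInvInvariant_of_isProbabilityMeasure : μ.IsInvInvariant where
  inv_eq_self :=
    calc
      μ.inv = (Measure.map Prod.fst (μ.prod μ)).inv := by rw [Measure.map_fst_prod]; simp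
      _ = Measure.map (Prod.snd ∘ fun z : G × G ↦ (z.2 * z.1, z.1⁻¹)) (μ.prod μ) :=
        Measure.map_map measurable_inv measurable_fst
      _ = μ := (measurePreserving_snd.comp (measurePreserving_mul_prod_inv μ μ)).map_eq

lemma isMulRightInvariant_of_isProbabilityMeasure : μ.IsMulRightInvariant := by
  have := isInvInvariant_of_isProbabilityMeasure μ
  rw [← μ.inv_eq_self]
  infer_instance

end Haar

section UnitaryGroup

variable {n 𝕜 : Type*} [Fintype n] [DecidableEq n] [RCLike 𝕜]

instance secondCountableTopology_unitaryGroup : SecondCountableTopology (unitaryGroup n 𝕜) :=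
  have : SecondCountableTopology (Matrix n n 𝕜) :=
    inferInstanceAs (SecondCountableTopology (n → n → 𝕜))
  TopologicalSpace.Subtype.secondCountableTopology _

instance compactSpace_unitaryGroup : CompactSpace (unitaryGroup n 𝕜) := by
  have hbox : IsCompact (Set.univ.pi fun _ ↦ Set.univ.pi fun _ ↦ Metric.closedBall 0 1 :
      Set (Matrix n n 𝕜)) :=
    isCompact_univ_pi fun _ ↦ isCompact_univ_pi fun _ ↦ isCompact_closedBall 0 1
  refine isCompact_iff_compactSpace.mp
    (hbox.of_isClosed_subset (isClosed_unitary (R := Matrix n n 𝕜)) fun U hU i _ j _ ↦ ?_)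
  simpa using entry_norm_bound_of_unitary hU i j

end UnitaryGroup

section KroneckerConj

variable {n R : Type*} [Fintype n] [CommRing R] [StarRing R]

/-- The operator `(U ⊗ U)ᴴ X (U ⊗ U)` on `Rⁿ ⊗ Rⁿ`. -/
def kroneckerConj (U : Matrix n n R) (X : Matrix (n × n) (n × n) R) :
    Matrix (n × n) (n × n) R :=
  (Uᴴ ⊗ₖ Uᴴ) * X * (U ⊗ₖ U)

lemma kroneckerConj_mul (U V : Matrix n n R) (X : Matrix (n × n) (n × n) R) :
    kroneckerConj (U * V) X = kroneckerConj V (kroneckerConj U X) := by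
  simp only [kroneckerConj, conjTranspose_mul, mul_kronecker_mul, Matrix.mul_assoc]

variable [DecidableEq n]

lemma kronecker_self_mul_conjTranspose {U : Matrix n n R} (hU : U ∈ unitaryGroup n R) :
    (U ⊗ₖ U) * (Uᴴ ⊗ₖ Uᴴ) = 1 := by
  rw [← mul_kronecker_mul, ← star_eq_conjTranspose, mem_unitaryGroup_iff.mp hU, one_kronecker_one]

lemma commute_kronecker_self_of_kroneckerConj_eq {U : Matrix n n R} (hU : U ∈ unitaryGroup n R)
    {X : Matrix (n × n) (n × n) R} (hX : kroneckerConj U X = X) : Commute X (U ⊗ₖ U) := by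
  have h : (U ⊗ₖ U) * kroneckerConj U X = X * (U ⊗ₖ U) := by
    rw [kroneckerConj, ← mul_assoc, ← mul_assoc, kronecker_self_mul_conjTranspose hU, one_mul]
  rwa [hX, eq_comm] at h

lemma trace_mul_kroneckerConj {C : Matrix (n × n) (n × n) R} {U : Matrix n n R}
    (hU : U ∈ unitaryGroup n R) (hC : Commute C (U ⊗ₖ U)) (X : Matrix (n × n) (n × n) R) :
    (C * kroneckerConj U X).trace = (C * X).trace :=
  calc
    (C * kroneckerConj U X).trace = (((U ⊗ₖ U) * C * (Uᴴ ⊗ₖ Uᴴ)) * X).trace := by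
      rw [kroneckerConj, ← mul_assoc, trace_mul_comm]
      simp only [mul_assoc]
    _ = (C * X).trace := by
      rw [← hC.eq, mul_assoc C, kronecker_self_mul_conjTranspose hU, mul_one]

end KroneckerConj

lemma continuous_kronecker {l m n p R X : Type*} [TopologicalSpace X] [TopologicalSpace R] [Mul R]
    [ContinuousMul R] {A : X → Matrix l m R} {B : X → Matrix n p R} (hA : Continuous A)
    (hB : Continuous B) : Continuous fun x ↦ A x ⊗ₖ B x :=
  continuous_matrix fun _ _ ↦ (hA.matrix_elem _ _).mul (hB.matrix_elem _ _)

lemma continuous_kroneckerConj {n R : Type*} [Fintype n] [CommRing R] [StarRing R]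
    [TopologicalSpace R] [IsTopologicalRing R] [ContinuousStar R]
    (X : Matrix (n × n) (n × n) R) : Continuous fun U : Matrix n n R ↦ kroneckerConj U X :=
  have hstar : Continuous fun U : Matrix n n R ↦ Uᴴ := continuous_id.matrix_conjTranspose
  ((continuous_kronecker hstar hstar).matrix_mul continuous_const).matrix_mul
    (continuous_kronecker continuous_id continuous_id)

lemma map_matrix_integral {Ω 𝕜 m n : Type*} [RCLike 𝕜] [Finite m] [Finite n]
    [MeasurableSpace Ω] {μ : Measure Ω} {F : Ω → Matrix m n 𝕜}
    (hF : ∀ i j, Integrable (fun ω ↦ F ω i j) μ) (φ : Matrix m n 𝕜 →ₗ[𝕜] 𝕜) :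
    φ (of fun i j ↦ ∫ ω, F ω i j ∂μ) = ∫ ω, φ (F ω) ∂μ := by
  classical
  have := Fintype.ofFinite m
  have := Fintype.ofFinite n
  have hφ (A : Matrix m n 𝕜) : φ A = ∑ i, ∑ j, A i j * φ (single i j 1) := by
    conv_lhs => rw [matrix_eq_sum_single A]
    simp only [map_sum, ← smul_eq_mul, ← map_smul, smul_single]
    simp only [smul_eq_mul, mul_one]
  rw [hφ]
  simp only [hφ (F _), of_apply, ← integral_mul_const]
  rw [integral_finsetSum _ fun i _ ↦ integrable_finsetSum _ fun j _ ↦ (hF i j).mul_const _]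
  refine Finset.sum_congr rfl fun i _ ↦ ?_
  rw [integral_finsetSum _ fun j _ ↦ (hF i j).mul_const _]

section Twirl

variable {n : Type*} [Fintype n] [DecidableEq n] [MeasurableSpace (unitaryGroup n ℂ)]

/-- The second-moment twirl `X ↦ E[(U ⊗ U)ᴴ X (U ⊗ U)]` of a measure on the unitary group, with
the expectation taken entrywise. -/
def twirl (μ : Measure (unitaryGroup n ℂ)) (X : Matrix (n × n) (n × n) ℂ) :
    Matrix (n × n) (n × n) ℂ :=
  of fun p q ↦ ∫ U : unitaryGroup n ℂ, kroneckerConj (U : Matrix n n ℂ) X p q ∂μ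

variable [BorelSpace (unitaryGroup n ℂ)] (μ : Measure (unitaryGroup n ℂ))

lemma map_twirl [IsFiniteMeasure μ] (X : Matrix (n × n) (n × n) ℂ)
    (φ : Matrix (n × n) (n × n) ℂ →ₗ[ℂ] ℂ) :
    φ (twirl μ X) = ∫ U : unitaryGroup n ℂ, φ (kroneckerConj (U : Matrix n n ℂ) X) ∂μ :=
  map_matrix_integral (fun p q ↦ (((continuous_kroneckerConj X).comp
    continuous_subtype_val).matrix_elem p q).integrable_of_hasCompactSupport (.of_compactSpace _)) φ

lemma kroneckerConj_twirl [IsFiniteMeasure μ] [μ.IsMulRightInvariant] (V : unitaryGroup n ℂ)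
    (X : Matrix (n × n) (n × n) ℂ) : kroneckerConj (V : Matrix n n ℂ) (twirl μ X) = twirl μ X := by
  ext p q
  let φ : Matrix (n × n) (n × n) ℂ →ₗ[ℂ] ℂ :=
    entryLinearMap ℂ ℂ p q ∘ₗ LinearMap.mulRight ℂ ((V : Matrix n n ℂ) ⊗ₖ (V : Matrix n n ℂ)) ∘ₗ
      LinearMap.mulLeft ℂ ((V : Matrix n n ℂ)ᴴ ⊗ₖ (V : Matrix n n ℂ)ᴴ)
  calc
    φ (twirl μ X) = ∫ U : unitaryGroup n ℂ,
        kroneckerConj ((U * V : unitaryGroup n ℂ) : Matrix n n ℂ) X p q ∂μ := by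
      simp only [map_twirl, Submonoid.coe_mul, kroneckerConj_mul]
      rfl
    _ = twirl μ X p q :=
      integral_mul_right_eq_self
        (fun U : unitaryGroup n ℂ ↦ kroneckerConj (U : Matrix n n ℂ) X p q) V

lemma trace_mul_twirl [IsProbabilityMeasure μ] {C : Matrix (n × n) (n × n) ℂ}
    (hC : ∀ U ∈ unitaryGroup n ℂ, Commute C (U ⊗ₖ U)) (X : Matrix (n × n) (n × n) ℂ) :
    (C * twirl μ X).trace = (C * X).trace := by
  have h := map_twirl μ X (traceLinearMap _ ℂ ℂ ∘ₗ LinearMap.mulLeft ℂ C)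
  have hconst (U : unitaryGroup n ℂ) := trace_mul_kroneckerConj U.2 (hC U U.2) X
  simpa [hconst] using h

end Twirl

lemma eq_smul_swapMatrix_add_smul_one_of_commute_unitary {n : Type*} [Fintype n] [DecidableEq n]
    [Nontrivial n] {M : Matrix (n × n) (n × n) ℂ}
    (hM : ∀ U ∈ unitaryGroup n ℂ, Commute M (U ⊗ₖ U)) :
    M = ((Fintype.card n * (swapMatrix n ℂ * M).trace - M.trace) /
          (Fintype.card n * (Fintype.card n ^ 2 - 1))) • swapMatrix n ℂ +
        ((Fintype.card n * M.trace - (swapMatrix n ℂ * M).trace) /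
          (Fintype.card n * (Fintype.card n ^ 2 - 1))) • 1 := by
  obtain ⟨α, β, hαβ⟩ := exists_eq_smul_one_add_smul_swapMatrix_of_commute_unitary hM
  set d : ℂ := (Fintype.card n : ℂ) with hd
  have hd₀ : d ≠ 0 := Nat.cast_ne_zero.mpr Fintype.card_ne_zero
  have hd₁ : d ^ 2 - 1 ≠ 0 := by
    rw [sub_ne_zero, ← one_pow 2, hd]
    norm_cast
    exact (Nat.pow_left_injective two_ne_zero).ne Fintype.one_lt_card.ne'
  have htrace : M.trace = α * d ^ 2 + β * d := by
    simp [hαβ, trace_swapMatrix, hd, sq]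
  have htrace_swap : (swapMatrix n ℂ * M).trace = α * d + β * d ^ 2 := by
    simp [hαβ, mul_add, trace_swapMatrix, hd, sq]
  have hα : (d * M.trace - (swapMatrix n ℂ * M).trace) / (d * (d ^ 2 - 1)) = α := by
    rw [htrace, htrace_swap]
    field_simp
    ring
  have hβ : (d * (swapMatrix n ℂ * M).trace - M.trace) / (d * (d ^ 2 - 1)) = β := by
    rw [htrace, htrace_swap]
    field_simp
    ring
  rw [hα, hβ, add_comm, hαβ]

theorem stmt_5_general {n : Type*} [Fintype n] [DecidableEq n] [Nontrivial n]
    [MeasurableSpace (unitaryGroup n ℂ)] [BorelSpace (unitaryGroup n ℂ)]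
    (μ : Measure (unitaryGroup n ℂ)) [IsProbabilityMeasure μ] [μ.IsMulLeftInvariant]
    (X : Matrix (n × n) (n × n) ℂ) :
    twirl μ X =
      ((Fintype.card n * (swapMatrix n ℂ * X).trace - X.trace) /
          (Fintype.card n * (Fintype.card n ^ 2 - 1))) • swapMatrix n ℂ +
        ((Fintype.card n * X.trace - (swapMatrix n ℂ * X).trace) /
          (Fintype.card n * (Fintype.card n ^ 2 - 1))) • 1 := by
  have := isMulRightInvariant_of_isProbabilityMeasure μ
  have hcomm (U) (hU : U ∈ unitaryGroup n ℂ) : Commute (twirl μ X) (U ⊗ₖ U) :=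
    commute_kronecker_self_of_kroneckerConj_eq hU (kroneckerConj_twirl μ ⟨U, hU⟩ X)
  have htrace : (twirl μ X).trace = X.trace := by
    simpa using trace_mul_twirl μ (fun U _ ↦ Commute.one_left (U ⊗ₖ U)) X
  have htrace_swap : (swapMatrix n ℂ * twirl μ X).trace = (swapMatrix n ℂ * X).trace :=
    trace_mul_twirl μ (fun U _ ↦ swapMatrix_mul_kronecker U U) X
  simpa only [htrace, htrace_swap] using eq_smul_swapMatrix_add_smul_one_of_commute_unitary hcomm

/-- Second-moment (2-design) formula for the Haar measure on `U(d)`: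
`E[(U†⊗U†)(A⊗B)(U⊗U)]
 = ((d·Tr(AB) − Tr A·Tr B)/(d(d²−1)))·𝔽 + ((d·Tr A·Tr B − Tr(AB))/(d(d²−1)))·𝕀`,
the expectation taken entrywise.  The Haar probability measure on `U(d)` is any
left-invariant Borel probability measure `μ`. -/
theorem stmt_5 (d : ℕ) (hd : 2 ≤ d)
    [MeasurableSpace (Matrix.unitaryGroup (Fin d) ℂ)]
    [BorelSpace (Matrix.unitaryGroup (Fin d) ℂ)]
    (μ : Measure (Matrix.unitaryGroup (Fin d) ℂ))
    [IsProbabilityMeasure μ] [μ.IsMulLeftInvariant]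
    (A B : Matrix (Fin d) (Fin d) ℂ) :
    ∀ p q : Fin d × Fin d,
      (∫ U : Matrix.unitaryGroup (Fin d) ℂ,
          (((U : Matrix (Fin d) (Fin d) ℂ)ᴴ ⊗ₖ (U : Matrix (Fin d) (Fin d) ℂ)ᴴ)
            * (A ⊗ₖ B)
            * ((U : Matrix (Fin d) (Fin d) ℂ) ⊗ₖ (U : Matrix (Fin d) (Fin d) ℂ))) p q ∂μ)
        = ((((d : ℂ) * (A * B).trace - A.trace * B.trace) / (d * (d ^ 2 - 1))) • swapOp d
            + (((d : ℂ) * A.trace * B.trace - (A * B).trace) / (d * (d ^ 2 - 1)))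
              • (1 : Matrix (Fin d × Fin d) (Fin d × Fin d) ℂ)) p q := by
  have : Nontrivial (Fin d) := Fin.nontrivial_iff_two_le.mpr hd
  have h := congrFun₂ (stmt_5_general μ (A ⊗ₖ B))
  rwa [trace_swapMatrix_mul_kronecker, trace_kronecker, swapMatrix_fin_eq_swapOp, Fintype.card_fin,
    ← mul_assoc] at h
end
end

section
/- Let ψ₀ be a unit vector in (ℂ²)^{⊗N}, set d = 2^N, and let A ∈ M_d(ℂ) be Hermitian with Pauli decomposition A = Σ_{i∈{0,1,2,3}^N} a_i P_i, where P_i = ⊗_{r=1}^N P_{i_r} (with P₀=I₂, P₁=X, P₂=Y, P₃=Z) and a_i = Tr(A·P_i)/d. Let U₁, …, U_N be independent Haar-random elements of U(2) and ψ = (⊗_{i=1}^N U_i)ψ₀. Then E[⟨ψ|A|ψ⟩²] = (Tr(A)/d)² + Σ_{i≠(0,…,0)} a_i² · Tr( |ψ₀⟩⟨ψ₀|^{⊗2} · ⊗_{r=1}^N T_{i_r} ), where for each qubit r the operator T_{i_r} acts on the two copies of the r-th qubit factor (one copy in each tensor copy of (ℂ²)^{⊗N}) and equals 𝕀 (the identity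 on ℂ²⊗ℂ²) if i_r = 0 and equals (2𝔽 − 𝕀)/3 if i_r ≠ 0, with 𝔽 the swap operator on ℂ²⊗ℂ². -/
open Matrix MeasureTheory

noncomputable section

/-- The four single-qubit Pauli matrices `I₂, X, Y, Z`. -/
def pauli : Fin 4 → Matrix (Fin 2) (Fin 2) ℂ
  | 0 => 1
  | 1 => !![0, 1; 1, 0]
  | 2 => !![0, -Complex.I; Complex.I, 0]
  | 3 => !![1, 0; 0, -1]

/-- The `N`-qubit Pauli string `⊗_{r=1}^N P_{i r}` on `(ℂ²)^{⊗N} ≅ ℂ^{2^N}`. -/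
def pauliString (N : ℕ) (i : Fin N → Fin 4) :
    Matrix (Fin N → Fin 2) (Fin N → Fin 2) ℂ :=
  fun x y => ∏ r, pauli (i r) (x r) (y r)

/-- The tensor product `⊗_{i=1}^N U_i` of single-qubit unitaries. -/
def tensorU (N : ℕ) (U : Fin N → Matrix.unitaryGroup (Fin 2) ℂ) :
    Matrix (Fin N → Fin 2) (Fin N → Fin 2) ℂ :=
  fun x y => ∏ i, (U i : Matrix (Fin 2) (Fin 2) ℂ) (x i) (y i)

/-- The operator `⊗_{r=1}^N T_{i_r}` on `((ℂ²)^{⊗N})^{⊗2}`, where on the pair of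
copies of qubit `r` the factor `T_{i_r}` is the identity `𝕀` if `i_r = 0` and
`(2𝔽 − 𝕀)/3` otherwise (`𝔽` the swap on `ℂ²⊗ℂ²`).  The first components of the
indices refer to the first tensor copy, and the second components to the second. -/
def pairOp (N : ℕ) (i : Fin N → Fin 4) :
    Matrix ((Fin N → Fin 2) × (Fin N → Fin 2)) ((Fin N → Fin 2) × (Fin N → Fin 2)) ℂ :=
  fun x y => ∏ r,
    if i r = 0 then (if x.1 r = y.1 r ∧ x.2 r = y.2 r then (1 : ℂ) else 0)
    else (2 * (if x.1 r = y.2 r ∧ x.2 r = y.1 r then (1 : ℂ) else 0)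
            - (if x.1 r = y.1 r ∧ x.2 r = y.2 r then (1 : ℂ) else 0)) / 3

/-- The operator `|ψ₀⟩⟨ψ₀|^{⊗2}` on `((ℂ²)^{⊗N})^{⊗2}`. -/
def projTwo (N : ℕ) (ψ₀ : (Fin N → Fin 2) → ℂ) :
    Matrix ((Fin N → Fin 2) × (Fin N → Fin 2)) ((Fin N → Fin 2) × (Fin N → Fin 2)) ℂ :=
  fun x y => ψ₀ x.1 * ψ₀ x.2 * (starRingEnd ℂ (ψ₀ y.1) * starRingEnd ℂ (ψ₀ y.2))

/-! Squaring `⟨ψ|A|ψ⟩` turns it into the trace of `A ⊗ A` against two copies of `|ψ⟩⟨ψ|`, and moving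
the unitaries onto `A ⊗ A` leaves the twofold twirl `T ↦ 𝔼[(U ⊗ U)ᴴ T (U ⊗ U)]`, which acts qubit by
qubit because the factors of `U` are independent. On one qubit, invariance of the Haar measure under
a Pauli matrix anticommuting with exactly one of `P_k ≠ P_l` kills the twirl of `P_k ⊗ P_l`, and
invariance under a unitary permuting `X, Y, Z` cyclically makes the twirls of `X ⊗ X`, `Y ⊗ Y` and
`Z ⊗ Z` equal. Their sum is `2𝔽 − 𝕀`, since `∑ₖ P_k ⊗ P_k = 2𝔽` commutes with `U ⊗ U`. -/

open scoped Kronecker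

section UnitaryGroup

instance {m n R : Type*} [Countable m] [Countable n] [TopologicalSpace R]
    [SecondCountableTopology R] : SecondCountableTopology (Matrix m n R) :=
  inferInstanceAs (SecondCountableTopology (m → n → R))

variable {n 𝕜 : Type*} [Fintype n] [DecidableEq n] [RCLike 𝕜]

instance : SecondCountableTopology (unitaryGroup n 𝕜) :=
  Topology.IsEmbedding.subtypeVal.secondCountableTopology

instance : CompactSpace (unitaryGroup n 𝕜) := by
  have polydisc_compact :
      IsCompact (Set.univ.pi fun _ : n => Set.univ.pi fun _ : n => Metric.closedBall (0 : 𝕜) 1) :=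
    isCompact_univ_pi fun _ => isCompact_univ_pi fun _ => isCompact_closedBall 0 1
  refine isCompact_iff_compactSpace.mp <|
    IsCompact.of_isClosed_subset (X := Matrix n n 𝕜) polydisc_compact isClosed_unitary ?_
  exact fun U hU i _ j _ => mem_closedBall_zero_iff.mpr (entry_norm_bound_of_unitary hU i j)

/-- The inclusion of the unitary group into the matrices, as a continuous map. -/
def unitaryInclusion (n 𝕜 : Type*) [Fintype n] [DecidableEq n] [RCLike 𝕜] :
    C(unitaryGroup n 𝕜, Matrix n n 𝕜) :=
  ⟨Subtype.val, continuous_subtype_val⟩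

end UnitaryGroup

section TensorPower

variable {ι l m n R : Type*} [Fintype ι]

/-- The tensor product `⊗ᵣ M r` of a finite family of matrices, its rows and columns indexed by
functions on the index set of the family. -/
def piTensor [CommMonoid R] (M : ι → Matrix m n R) : Matrix (ι → m) (ι → n) R :=
  of fun x y => ∏ r, M r (x r) (y r)

/-- The tensor product of a family of operators `M r`, each acting on two copies of the `r`-th
factor, as an operator on two copies of the whole tensor power. -/
def pairTensor [CommMonoid R] (M : ι → Matrix (m × m) (n × n) R) :
    Matrix ((ι → m) × (ι → m)) ((ι → n) × (ι → n)) R :=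
  of fun p q => ∏ r, M r (p.1 r, p.2 r) (q.1 r, q.2 r)

lemma piTensor_mul [DecidableEq ι] [Fintype m] [CommSemiring R]
    (A : ι → Matrix l m R) (B : ι → Matrix m n R) :
    piTensor A * piTensor B = piTensor fun r => A r * B r := by
  ext x y
  simp only [piTensor, of_apply, Matrix.mul_apply, Finset.prod_univ_sum, Fintype.piFinset_univ,
    Finset.prod_mul_distrib]

lemma conjTranspose_piTensor [CommSemiring R] [StarRing R] (A : ι → Matrix m n R) :
    (piTensor A)ᴴ = piTensor fun r => (A r)ᴴ := by
  ext x y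
  simp only [piTensor, of_apply, conjTranspose_apply, star_prod]

lemma piTensor_one [DecidableEq n] [CommSemiring R] :
    piTensor (fun _ : ι => (1 : Matrix n n R)) = 1 := by
  ext x y
  simp only [piTensor, of_apply, Matrix.one_apply, Finset.prod_ite_zero, Finset.mem_univ,
    true_imp_iff, Finset.prod_const_one, funext_iff]

lemma piTensor_kronecker_piTensor [CommSemiring R] (A B : ι → Matrix m n R) :
    piTensor A ⊗ₖ piTensor B = pairTensor fun r => A r ⊗ₖ B r := by
  ext p q
  simp only [piTensor, pairTensor, of_apply, kroneckerMap_apply, Finset.prod_mul_distrib]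

lemma pairTensor_one [DecidableEq n] [CommSemiring R] :
    pairTensor (fun _ : ι => (1 : Matrix (n × n) (n × n) R)) = 1 := by
  simp only [← one_kronecker_one, ← piTensor_kronecker_piTensor, piTensor_one]

end TensorPower

section SwapOperator

/-- The operator `𝔽` with `𝔽 (u ⊗ v) = v ⊗ u`. -/
def swapOperator (n R : Type*) [DecidableEq n] [Zero R] [One R] : Matrix (n × n) (n × n) R :=
  Equiv.Perm.permMatrix R (Equiv.prodComm n n)

variable {n R : Type*} [DecidableEq n]

lemma swapOperator_apply [Zero R] [One R] (p q : n × n) :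
    swapOperator n R p q = if p.1 = q.2 ∧ p.2 = q.1 then 1 else 0 := by
  simp only [swapOperator, PEquiv.toMatrix_apply, Equiv.toPEquiv_apply, Equiv.prodComm_apply,
    Option.mem_some_iff, Prod.ext_iff, Prod.fst_swap, Prod.snd_swap, and_comm]

lemma swapOperator_mul_kronecker [Fintype n] [CommSemiring R] (A B : Matrix n n R) :
    swapOperator n R * (A ⊗ₖ B) = (B ⊗ₖ A) * swapOperator n R := by
  ext p q
  rw [swapOperator, PEquiv.toMatrix_toPEquiv_mul, PEquiv.mul_toMatrix_toPEquiv]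
  exact mul_comm _ _

end SwapOperator

lemma trace_vecMulVec_kronecker_mul_kronecker {m n R : Type*} [Fintype m] [Fintype n]
    [CommSemiring R] (u v : m → R) (w z : n → R) (A : Matrix m m R) (B : Matrix n n R) :
    ((vecMulVec u v ⊗ₖ vecMulVec w z) * (A ⊗ₖ B)).trace = (v ⬝ᵥ A *ᵥ u) * (z ⬝ᵥ B *ᵥ w) := by
  rw [← mul_kronecker_mul, trace_kronecker]
  simp only [vecMulVec_mul, trace_vecMulVec, dotProduct_mulVec, dotProduct_comm u,
    dotProduct_comm w]

section TwofoldConj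

variable {m R : Type*} [Fintype m] [CommSemiring R] [StarRing R]

/-- Conjugation `T ↦ (V ⊗ V)ᴴ T (V ⊗ V)` of an operator on two copies of a space. -/
def twofoldConj (V : Matrix m m R) (T : Matrix (m × m) (m × m) R) : Matrix (m × m) (m × m) R :=
  (V ⊗ₖ V)ᴴ * T * (V ⊗ₖ V)

lemma twofoldConj_kronecker (V B C : Matrix m m R) :
    twofoldConj V (B ⊗ₖ C) = (Vᴴ * B * V) ⊗ₖ (Vᴴ * C * V) := by
  rw [twofoldConj, conjTranspose_kronecker, ← mul_kronecker_mul, ← mul_kronecker_mul]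

lemma twofoldConj_mul (V U : Matrix m m R) (T : Matrix (m × m) (m × m) R) :
    twofoldConj (V * U) T = twofoldConj U (twofoldConj V T) := by
  simp only [twofoldConj, mul_kronecker_mul, conjTranspose_mul, Matrix.mul_assoc]

lemma twofoldConj_piTensor {ι : Type*} [Fintype ι] [DecidableEq ι] (V B C : ι → Matrix m m R) :
    twofoldConj (piTensor V) (piTensor B ⊗ₖ piTensor C)
      = pairTensor fun r => twofoldConj (V r) (B r ⊗ₖ C r) := by
  rw [twofoldConj_kronecker, conjTranspose_piTensor]
  simp only [piTensor_mul, piTensor_kronecker_piTensor, twofoldConj_kronecker]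

variable [DecidableEq m] {U : Matrix m m R}

lemma twofoldConj_one_of_unitary (hU : Uᴴ * U = 1) : twofoldConj U 1 = 1 := by
  rw [← one_kronecker_one, twofoldConj_kronecker, Matrix.mul_one, hU]

lemma twofoldConj_swapOperator_of_unitary (hU : Uᴴ * U = 1) :
    twofoldConj U (swapOperator m R) = swapOperator m R := by
  rw [twofoldConj, Matrix.mul_assoc, swapOperator_mul_kronecker, ← Matrix.mul_assoc,
    conjTranspose_kronecker, ← mul_kronecker_mul, hU, one_kronecker_one, Matrix.one_mul]

end TwofoldConj

section TwofoldTwirl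

variable {m 𝕜 : Type*} [Fintype m] [RCLike 𝕜] {Ω : Type*} [TopologicalSpace Ω] [CompactSpace Ω]
  [MeasurableSpace Ω] [OpensMeasurableSpace Ω] (ν : Measure Ω) (W : C(Ω, Matrix m m 𝕜))

lemma integrable_twofoldConj_apply [IsFiniteMeasure ν] (T : Matrix (m × m) (m × m) 𝕜)
    (p q : m × m) : Integrable (fun ω => twofoldConj (W ω) T p q) ν := by
  have square_continuous : Continuous fun ω => W ω ⊗ₖ W ω :=
    continuous_matrix fun p q =>
      (W.continuous.matrix_elem p.1 q.1).mul (W.continuous.matrix_elem p.2 q.2)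
  have conj_continuous : Continuous fun ω => twofoldConj (W ω) T :=
    (square_continuous.matrix_conjTranspose.matrix_mul continuous_const).matrix_mul
      square_continuous
  exact (conj_continuous.matrix_elem p q).integrable_of_hasCompactSupport
    (HasCompactSupport.of_compactSpace _)

/-- The twofold twirl `T ↦ 𝔼[(W ⊗ W)ᴴ T (W ⊗ W)]` of a random matrix `W`, the expectation being
taken entrywise. -/
def twofoldTwirl [IsFiniteMeasure ν] :
    Matrix (m × m) (m × m) 𝕜 →ₗ[𝕜] Matrix (m × m) (m × m) 𝕜 where
  toFun T := of fun p q => ∫ ω, twofoldConj (W ω) T p q ∂ν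
  map_add' S T := by
    ext p q
    simp only [of_apply, Matrix.add_apply]
    rw [← integral_add (integrable_twofoldConj_apply ν W S p q)
      (integrable_twofoldConj_apply ν W T p q)]
    simp only [twofoldConj, Matrix.mul_add, Matrix.add_mul, Matrix.add_apply]
  map_smul' c T := by
    ext p q
    simp only [of_apply, Matrix.smul_apply, twofoldConj, Matrix.mul_smul, Matrix.smul_mul,
      integral_smul, RingHom.id_apply]

lemma twofoldTwirl_apply [IsFiniteMeasure ν] (T : Matrix (m × m) (m × m) 𝕜) (p q : m × m) :
    twofoldTwirl ν W T p q = ∫ ω, twofoldConj (W ω) T p q ∂ν :=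
  rfl

lemma twofoldTwirl_eq_self [IsProbabilityMeasure ν] {T : Matrix (m × m) (m × m) 𝕜}
    (hT : ∀ ω, twofoldConj (W ω) T = T) : twofoldTwirl ν W T = T := by
  ext p q
  simp only [twofoldTwirl_apply, hT, integral_const, probReal_univ, one_smul]

lemma integral_trace_mul_twofoldConj [IsFiniteMeasure ν] (S T : Matrix (m × m) (m × m) 𝕜) :
    ∫ ω, (S * twofoldConj (W ω) T).trace ∂ν = (S * twofoldTwirl ν W T).trace := by
  have integrable_term (p q : m × m) :
      Integrable (fun ω => S p q * twofoldConj (W ω) T q p) ν :=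
    (integrable_twofoldConj_apply ν W T q p).const_mul (S p q)
  simp only [trace, diag_apply, Matrix.mul_apply, twofoldTwirl_apply]
  rw [integral_finsetSum _ fun p _ => integrable_finsetSum _ fun q _ => integrable_term p q]
  refine Finset.sum_congr rfl fun p _ => ?_
  rw [integral_finsetSum _ fun q _ => integrable_term p q]
  simp only [integral_const_mul]

lemma integral_dotProduct_mulVec_sq [IsFiniteMeasure ν] (ψ : m → 𝕜) (A : Matrix m m 𝕜) :
    ∫ ω, (star (W ω *ᵥ ψ) ⬝ᵥ A *ᵥ (W ω *ᵥ ψ)) ^ 2 ∂ν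
      = ((vecMulVec ψ (star ψ) ⊗ₖ vecMulVec ψ (star ψ)) * twofoldTwirl ν W (A ⊗ₖ A)).trace := by
  have heisenberg_picture (ω : Ω) :
      star (W ω *ᵥ ψ) ⬝ᵥ A *ᵥ (W ω *ᵥ ψ) = star ψ ⬝ᵥ ((W ω)ᴴ * A * W ω) *ᵥ ψ := by
    rw [star_mulVec, ← dotProduct_mulVec, mulVec_mulVec, mulVec_mulVec, Matrix.mul_assoc]
  simp only [heisenberg_picture, sq, ← trace_vecMulVec_kronecker_mul_kronecker,
    ← twofoldConj_kronecker, integral_trace_mul_twofoldConj]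

end TwofoldTwirl

section Independence

variable {ι m 𝕜 : Type*} [Fintype ι] [RCLike 𝕜] {Ω : ι → Type*} [∀ r, TopologicalSpace (Ω r)]

/-- The tensor product `⊗ᵣ W r` as a function of independent arguments of the factors. -/
def piTensorMap (W : ∀ r, C(Ω r, Matrix m m 𝕜)) : C(∀ r, Ω r, Matrix (ι → m) (ι → m) 𝕜) where
  toFun ω := piTensor fun r => W r (ω r)
  continuous_toFun := continuous_matrix fun x y => continuous_finsetProd _ fun r _ =>
    ((W r).continuous.comp (continuous_apply r)).matrix_elem (x r) (y r)

lemma twofoldTwirl_piTensorMap [DecidableEq ι] [Fintype m] [∀ r, CompactSpace (Ω r)]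
    [∀ r, SecondCountableTopology (Ω r)] [∀ r, MeasurableSpace (Ω r)]
    [∀ r, OpensMeasurableSpace (Ω r)] (ν : ∀ r, Measure (Ω r)) [∀ r, IsFiniteMeasure (ν r)]
    (W : ∀ r, C(Ω r, Matrix m m 𝕜)) (B C : ι → Matrix m m 𝕜) :
    twofoldTwirl (Measure.pi ν) (piTensorMap W) (piTensor B ⊗ₖ piTensor C)
      = pairTensor fun r => twofoldTwirl (ν r) (W r) (B r ⊗ₖ C r) := by
  ext p q
  simp only [twofoldTwirl_apply, piTensorMap, ContinuousMap.coe_mk, twofoldConj_piTensor,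
    pairTensor, of_apply]
  exact integral_fintype_prod_eq_prod fun r ω =>
    twofoldConj (W r ω) (B r ⊗ₖ C r) (p.1 r, p.2 r) (q.1 r, q.2 r)

end Independence

section UnitaryTwirl

variable {n 𝕜 : Type*} [Fintype n] [DecidableEq n] [RCLike 𝕜]
  [MeasurableSpace (unitaryGroup n 𝕜)] [BorelSpace (unitaryGroup n 𝕜)]
  (μ : Measure (unitaryGroup n 𝕜))

lemma twofoldTwirl_unitary_one [IsProbabilityMeasure μ] :
    twofoldTwirl μ (unitaryInclusion n 𝕜) 1 = 1 :=
  twofoldTwirl_eq_self μ _ fun U => twofoldConj_one_of_unitary (mem_unitaryGroup_iff'.mp U.2)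

lemma twofoldTwirl_unitary_swapOperator [IsProbabilityMeasure μ] :
    twofoldTwirl μ (unitaryInclusion n 𝕜) (swapOperator n 𝕜) = swapOperator n 𝕜 :=
  twofoldTwirl_eq_self μ _ fun U =>
    twofoldConj_swapOperator_of_unitary (mem_unitaryGroup_iff'.mp U.2)

lemma twofoldTwirl_unitary_twofoldConj [IsFiniteMeasure μ] [μ.IsMulLeftInvariant]
    {V : Matrix n n 𝕜} (hV : V ∈ unitaryGroup n 𝕜) (T : Matrix (n × n) (n × n) 𝕜) :
    twofoldTwirl μ (unitaryInclusion n 𝕜) (twofoldConj V T)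
      = twofoldTwirl μ (unitaryInclusion n 𝕜) T := by
  ext p q
  simp only [twofoldTwirl_apply, ← twofoldConj_mul]
  exact integral_mul_left_eq_self
    (fun U => twofoldConj (unitaryInclusion n 𝕜 U) T p q) (⟨V, hV⟩ : unitaryGroup n 𝕜)

end UnitaryTwirl

section Pauli

lemma pauli_zero : pauli 0 = 1 :=
  rfl

lemma pauli_mem_unitaryGroup (k : Fin 4) : pauli k ∈ unitaryGroup (Fin 2) ℂ := by
  rw [mem_unitaryGroup_iff]
  ext x y
  fin_cases k <;> fin_cases x <;> fin_cases y <;>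
    simp [pauli, Matrix.mul_apply, star_apply, Matrix.one_apply]

lemma sum_pauli_kronecker_self : ∑ k, pauli k ⊗ₖ pauli k = (2 : ℂ) • swapOperator (Fin 2) ℂ := by
  ext ⟨x, x'⟩ ⟨y, y'⟩
  simp only [Fin.sum_univ_four]
  fin_cases x <;> fin_cases x' <;> fin_cases y <;> fin_cases y' <;>
    norm_num [pauli, swapOperator_apply, Matrix.one_apply]

lemma sum_pauli_succ_kronecker_self :
    ∑ k : Fin 3, pauli k.succ ⊗ₖ pauli k.succ = (2 : ℂ) • swapOperator (Fin 2) ℂ - 1 := by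
  rw [← sum_pauli_kronecker_self, Fin.sum_univ_succ (n := 3), eq_sub_iff_add_eq', pauli_zero,
    one_kronecker_one]

/-- The sign in `Pₘ Pₖ Pₘ = ± Pₖ`: Pauli matrices either commute or anticommute. -/
def pauliSign (m k : Fin 4) : ℤ := if m = 0 ∨ k = 0 ∨ m = k then 1 else -1

lemma exists_pauliSign_mul_eq_neg_one :
    ∀ {k l : Fin 4}, k ≠ l → ∃ m, pauliSign m k * pauliSign m l = -1 := by
  decide

lemma pauli_conj_pauli (m k : Fin 4) :
    (pauli m)ᴴ * pauli k * pauli m = (pauliSign m k : ℂ) • pauli k := by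
  ext x y
  fin_cases m <;> fin_cases k <;> fin_cases x <;> fin_cases y <;>
    simp [pauliSign, pauli, Matrix.mul_apply, Matrix.one_apply]

lemma twofoldConj_pauli_kronecker (m k l : Fin 4) :
    twofoldConj (pauli m) (pauli k ⊗ₖ pauli l)
      = ((pauliSign m k * pauliSign m l : ℤ) : ℂ) • (pauli k ⊗ₖ pauli l) := by
  rw [twofoldConj_kronecker, pauli_conj_pauli, pauli_conj_pauli, smul_kronecker, kronecker_smul,
    smul_smul, Int.cast_mul]

/-- The unitary `(I + iX + iY + iZ) / 2`, which rotates the Bloch sphere by `2π/3` about the axis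
`(1, 1, 1)` and hence permutes `X`, `Y`, `Z` cyclically. -/
def pauliCycle : Matrix (Fin 2) (Fin 2) ℂ :=
  (2⁻¹ : ℂ) • !![1 + Complex.I, Complex.I + 1; Complex.I - 1, 1 - Complex.I]

lemma pauliCycle_mem_unitaryGroup : pauliCycle ∈ unitaryGroup (Fin 2) ℂ := by
  rw [mem_unitaryGroup_iff]
  ext x y
  fin_cases x <;> fin_cases y <;>
    simp [pauliCycle, Matrix.mul_apply, star_apply, Complex.ext_iff] <;> norm_num

lemma pauliCycle_conj_pauli_succ (k : Fin 3) :
    pauliCycleᴴ * pauli k.succ * pauliCycle = pauli (k + 1).succ := by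
  ext x y
  fin_cases k <;> fin_cases x <;> fin_cases y <;>
    simp [pauliCycle, pauli, Matrix.mul_apply, Complex.ext_iff] <;> norm_num

/-- The operator `T_k` on two copies of a qubit: `𝕀` for `k = 0` and `(2𝔽 − 𝕀)/3` otherwise. -/
def pauliTwirl (k : Fin 4) : Matrix (Fin 2 × Fin 2) (Fin 2 × Fin 2) ℂ :=
  if k = 0 then 1 else (3⁻¹ : ℂ) • ((2 : ℂ) • swapOperator (Fin 2) ℂ - 1)

variable [MeasurableSpace (unitaryGroup (Fin 2) ℂ)] [BorelSpace (unitaryGroup (Fin 2) ℂ)]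
  (μ : Measure (unitaryGroup (Fin 2) ℂ)) [μ.IsMulLeftInvariant]

lemma twofoldTwirl_pauli_kronecker_of_ne [IsFiniteMeasure μ] {k l : Fin 4} (hkl : k ≠ l) :
    twofoldTwirl μ (unitaryInclusion (Fin 2) ℂ) (pauli k ⊗ₖ pauli l) = 0 := by
  obtain ⟨m, hm⟩ := exists_pauliSign_mul_eq_neg_one hkl
  have sign_flip := twofoldTwirl_unitary_twofoldConj μ (pauli_mem_unitaryGroup m)
    (pauli k ⊗ₖ pauli l)
  rw [twofoldConj_pauli_kronecker, hm, Int.cast_neg, Int.cast_one, neg_one_smul, map_neg]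
    at sign_flip
  ext p q
  exact CharZero.neg_eq_self_iff.mp (congrFun₂ sign_flip p q)

lemma twofoldTwirl_pauli_succ_kronecker_self_eq [IsFiniteMeasure μ] (j k : Fin 3) :
    twofoldTwirl μ (unitaryInclusion (Fin 2) ℂ) (pauli j.succ ⊗ₖ pauli j.succ)
      = twofoldTwirl μ (unitaryInclusion (Fin 2) ℂ) (pauli k.succ ⊗ₖ pauli k.succ) := by
  have cyclic (i : Fin 3) :
      twofoldTwirl μ (unitaryInclusion (Fin 2) ℂ) (pauli (i + 1).succ ⊗ₖ pauli (i + 1).succ)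
        = twofoldTwirl μ (unitaryInclusion (Fin 2) ℂ) (pauli i.succ ⊗ₖ pauli i.succ) := by
    rw [← pauliCycle_conj_pauli_succ, ← twofoldConj_kronecker,
      twofoldTwirl_unitary_twofoldConj μ pauliCycle_mem_unitaryGroup]
  have eq_first : ∀ i : Fin 3,
      twofoldTwirl μ (unitaryInclusion (Fin 2) ℂ) (pauli i.succ ⊗ₖ pauli i.succ)
        = twofoldTwirl μ (unitaryInclusion (Fin 2) ℂ) (pauli 1 ⊗ₖ pauli 1)
    | 0 => rfl
    | 1 => cyclic 0
    | 2 => (cyclic 1).trans (cyclic 0)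
  rw [eq_first j, eq_first k]

lemma twofoldTwirl_pauli_succ_kronecker_self [IsProbabilityMeasure μ] (k : Fin 3) :
    twofoldTwirl μ (unitaryInclusion (Fin 2) ℂ) (pauli k.succ ⊗ₖ pauli k.succ)
      = (3⁻¹ : ℂ) • ((2 : ℂ) • swapOperator (Fin 2) ℂ - 1) := by
  rw [eq_inv_smul_iff₀ three_ne_zero]
  calc (3 : ℂ) • twofoldTwirl μ (unitaryInclusion (Fin 2) ℂ) (pauli k.succ ⊗ₖ pauli k.succ)
      = ∑ j : Fin 3,
          twofoldTwirl μ (unitaryInclusion (Fin 2) ℂ) (pauli j.succ ⊗ₖ pauli j.succ) := by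
        rw [Finset.sum_congr rfl fun j _ => twofoldTwirl_pauli_succ_kronecker_self_eq μ j k,
          Fin.sum_const, ← Nat.cast_smul_eq_nsmul ℂ, Nat.cast_ofNat]
    _ = (2 : ℂ) • swapOperator (Fin 2) ℂ - 1 := by
        rw [← map_sum, sum_pauli_succ_kronecker_self, map_sub, map_smul,
          twofoldTwirl_unitary_swapOperator, twofoldTwirl_unitary_one]

lemma twofoldTwirl_pauli_kronecker [IsProbabilityMeasure μ] (k l : Fin 4) :
    twofoldTwirl μ (unitaryInclusion (Fin 2) ℂ) (pauli k ⊗ₖ pauli l)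
      = if k = l then pauliTwirl k else 0 := by
  split_ifs with hkl
  · subst hkl
    cases k using Fin.cases with
    | zero => rw [pauli_zero, one_kronecker_one, twofoldTwirl_unitary_one, pauliTwirl, if_pos rfl]
    | succ j =>
      rw [twofoldTwirl_pauli_succ_kronecker_self, pauliTwirl, if_neg (Fin.succ_ne_zero j)]
  · exact twofoldTwirl_pauli_kronecker_of_ne μ hkl

end Pauli

section PauliString

variable {N : ℕ}

lemma pauliString_eq_piTensor (i : Fin N → Fin 4) :
    pauliString N i = piTensor fun r => pauli (i r) :=
  rfl

lemma pauliString_zero : pauliString N (fun _ => 0) = 1 :=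
  piTensor_one

lemma pairOp_eq_pairTensor (i : Fin N → Fin 4) :
    pairOp N i = pairTensor fun r => pauliTwirl (i r) := by
  ext p q
  simp only [pairOp, pairTensor, of_apply]
  refine Finset.prod_congr rfl fun r _ => ?_
  by_cases hr : i r = 0
  · simp only [hr, if_true, pauliTwirl, Matrix.one_apply, Prod.mk.injEq]
  · simp only [hr, if_false, pauliTwirl, Matrix.smul_apply, Matrix.sub_apply, Matrix.one_apply,
      swapOperator_apply, Prod.mk.injEq, smul_eq_mul, div_eq_inv_mul]

lemma pairOp_zero : pairOp N (fun _ => 0) = 1 := by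
  simp only [pairOp_eq_pairTensor, pauliTwirl, if_true, pairTensor_one]

lemma projTwo_eq_kronecker (ψ : (Fin N → Fin 2) → ℂ) :
    projTwo N ψ = vecMulVec ψ (star ψ) ⊗ₖ vecMulVec ψ (star ψ) := by
  ext p q
  exact mul_mul_mul_comm _ _ _ _

lemma trace_projTwo (ψ : (Fin N → Fin 2) → ℂ) : (projTwo N ψ).trace = (star ψ ⬝ᵥ ψ) ^ 2 := by
  rw [projTwo_eq_kronecker, trace_kronecker, trace_vecMulVec, dotProduct_comm, sq]

lemma sum_pauliString_apply_mul_apply (w z x y : Fin N → Fin 2) :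
    ∑ i, pauliString N i w z * pauliString N i x y = if w = y ∧ x = z then 2 ^ N else 0 := by
  have single_qubit (a b c d : Fin 2) :
      ∑ k, pauli k a b * pauli k c d = if a = d ∧ c = b then 2 else 0 := by
    simpa [Matrix.sum_apply, swapOperator_apply] using
      congrFun₂ sum_pauli_kronecker_self (a, c) (b, d)
  calc ∑ i, pauliString N i w z * pauliString N i x y
      = ∏ r, ∑ k, pauli k (w r) (z r) * pauli k (x r) (y r) := by
        simp only [pauliString, ← Finset.prod_mul_distrib, Finset.prod_univ_sum,
          Fintype.piFinset_univ]
    _ = if w = y ∧ x = z then 2 ^ N else 0 := by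
        simp only [single_qubit, Finset.prod_ite_zero, Finset.prod_const, Finset.card_univ,
          Fintype.card_fin, Finset.mem_univ, true_imp_iff, funext_iff, forall_and]

lemma sum_trace_mul_pauliString_smul (A : Matrix (Fin N → Fin 2) (Fin N → Fin 2) ℂ) :
    ∑ i, ((A * pauliString N i).trace / 2 ^ N) • pauliString N i = A := by
  ext x y
  calc (∑ i, ((A * pauliString N i).trace / 2 ^ N) • pauliString N i) x y
      = ∑ z, ∑ w, A z w * (∑ i, pauliString N i w z * pauliString N i x y) / 2 ^ N := by
        simp only [Matrix.sum_apply, Matrix.smul_apply, smul_eq_mul, trace, diag_apply,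
          Matrix.mul_apply, Finset.sum_div, Finset.sum_mul, Finset.mul_sum]
        rw [Finset.sum_comm]
        refine Finset.sum_congr rfl fun z _ => ?_
        rw [Finset.sum_comm]
        exact Finset.sum_congr rfl fun w _ => Finset.sum_congr rfl fun i _ => by ring
    _ = A x y := by
        simp [sum_pauliString_apply_mul_apply, ite_and, ite_div]

variable [MeasurableSpace (unitaryGroup (Fin 2) ℂ)] [BorelSpace (unitaryGroup (Fin 2) ℂ)]
  (μ : Measure (unitaryGroup (Fin 2) ℂ)) [IsProbabilityMeasure μ] [μ.IsMulLeftInvariant]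

lemma twofoldTwirl_pauliString_kronecker (i j : Fin N → Fin 4) :
    twofoldTwirl (Measure.pi fun _ => μ) (piTensorMap fun _ => unitaryInclusion (Fin 2) ℂ)
        (pauliString N i ⊗ₖ pauliString N j)
      = if i = j then pairOp N i else 0 := by
  simp only [pauliString_eq_piTensor, twofoldTwirl_piTensorMap, twofoldTwirl_pauli_kronecker]
  split_ifs with hij
  · simp only [hij, if_true, pairOp_eq_pairTensor]
  · obtain ⟨r, hr⟩ := Function.ne_iff.mp hij
    ext p q
    refine Finset.prod_eq_zero (Finset.mem_univ r) ?_
    simp only [hr, if_false, Matrix.zero_apply]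

lemma twofoldTwirl_sum_pauliString_kronecker_self (a : (Fin N → Fin 4) → ℂ) :
    twofoldTwirl (Measure.pi fun _ => μ) (piTensorMap fun _ => unitaryInclusion (Fin 2) ℂ)
        ((∑ i, a i • pauliString N i) ⊗ₖ (∑ i, a i • pauliString N i))
      = ∑ i, a i ^ 2 • pairOp N i := by
  have kronecker_expansion :
      (∑ i, a i • pauliString N i) ⊗ₖ (∑ i, a i • pauliString N i)
        = ∑ i, ∑ j, (a i * a j) • (pauliString N i ⊗ₖ pauliString N j) := by
    ext p q
    simp only [kroneckerMap_apply, Matrix.sum_apply, Matrix.smul_apply, smul_eq_mul,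
      Finset.sum_mul_sum, mul_mul_mul_comm]
  simp only [kronecker_expansion, map_sum, map_smul, twofoldTwirl_pauliString_kronecker, smul_ite,
    smul_zero, Finset.sum_ite_eq, Finset.mem_univ, if_true, sq]

lemma integral_dotProduct_mulVec_sq_eq_sum (ψ : (Fin N → Fin 2) → ℂ) (a : (Fin N → Fin 4) → ℂ) :
    ∫ U : Fin N → unitaryGroup (Fin 2) ℂ,
        (star (tensorU N U *ᵥ ψ) ⬝ᵥ (∑ i, a i • pauliString N i) *ᵥ (tensorU N U *ᵥ ψ)) ^ 2
        ∂(Measure.pi fun _ => μ)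
      = ∑ i, a i ^ 2 * (projTwo N ψ * pairOp N i).trace := by
  calc _ = (projTwo N ψ * ∑ i, a i ^ 2 • pairOp N i).trace := by
        rw [projTwo_eq_kronecker, ← twofoldTwirl_sum_pauliString_kronecker_self μ]
        exact integral_dotProduct_mulVec_sq _ (piTensorMap fun _ => unitaryInclusion (Fin 2) ℂ) _ _
    _ = _ := by
        simp only [Finset.mul_sum, Matrix.mul_smul, trace_sum, trace_smul, smul_eq_mul]

end PauliString

theorem stmt_6_general (N : ℕ)
    [MeasurableSpace (Matrix.unitaryGroup (Fin 2) ℂ)]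
    [BorelSpace (Matrix.unitaryGroup (Fin 2) ℂ)]
    (μ : Measure (Matrix.unitaryGroup (Fin 2) ℂ))
    [IsProbabilityMeasure μ] [μ.IsMulLeftInvariant]
    (ψ₀ : (Fin N → Fin 2) → ℂ) (hψ₀ : star ψ₀ ⬝ᵥ ψ₀ = 1)
    (A : Matrix (Fin N → Fin 2) (Fin N → Fin 2) ℂ)
    (a : (Fin N → Fin 4) → ℂ)
    (ha : ∀ i, a i = (A * pauliString N i).trace / 2 ^ N) :
    (∫ U : Fin N → Matrix.unitaryGroup (Fin 2) ℂ,
        (star ((tensorU N U).mulVec ψ₀) ⬝ᵥ A.mulVec ((tensorU N U).mulVec ψ₀)) ^ 2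
        ∂(Measure.pi fun _ => μ))
      = (A.trace / 2 ^ N) ^ 2
        + ∑ i ∈ Finset.univ.filter (fun i : Fin N → Fin 4 => i ≠ fun _ => 0),
            a i ^ 2 * (projTwo N ψ₀ * pairOp N i).trace := by
  have pauli_decomposition : A = ∑ i, a i • pauliString N i := by
    simp only [ha, sum_trace_mul_pauliString_smul]
  have identity_term :
      a (fun _ => 0) ^ 2 * (projTwo N ψ₀ * pairOp N fun _ => 0).trace = (A.trace / 2 ^ N) ^ 2 := by
    rw [pairOp_zero, Matrix.mul_one, trace_projTwo, hψ₀, ha, pauliString_zero, Matrix.mul_one,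
      one_pow, mul_one]
  conv_lhs => rw [pauli_decomposition]
  rw [integral_dotProduct_mulVec_sq_eq_sum, Finset.filter_ne', ← identity_term]
  exact (Finset.add_sum_erase _ (fun i => a i ^ 2 * (projTwo N ψ₀ * pairOp N i).trace)
    (Finset.mem_univ fun _ => 0)).symm

/-- Second moment of `⟨ψ|A|ψ⟩` for `ψ = (⊗ᵢUᵢ)ψ₀` with independent Haar-random
single-qubit unitaries `Uᵢ`:
`E[⟨ψ|A|ψ⟩²] = (Tr A/d)² + Σ_{i≠0} a_i² Tr(|ψ₀⟩⟨ψ₀|^{⊗2} ⊗_r T_{i_r})`,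
where `a_i = Tr(A·P_i)/d` are the Pauli coefficients of the Hermitian matrix `A`
and `d = 2^N`.  The Haar probability measure on `U(2)` is any left-invariant
Borel probability measure `μ`. -/
theorem stmt_6 (N : ℕ) (hN : 1 ≤ N)
    [MeasurableSpace (Matrix.unitaryGroup (Fin 2) ℂ)]
    [BorelSpace (Matrix.unitaryGroup (Fin 2) ℂ)]
    (μ : Measure (Matrix.unitaryGroup (Fin 2) ℂ))
    [IsProbabilityMeasure μ] [μ.IsMulLeftInvariant]
    (ψ₀ : (Fin N → Fin 2) → ℂ) (hψ₀ : star ψ₀ ⬝ᵥ ψ₀ = 1)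
    (A : Matrix (Fin N → Fin 2) (Fin N → Fin 2) ℂ) (hA : A.IsHermitian)
    (a : (Fin N → Fin 4) → ℂ)
    (ha : ∀ i, a i = (A * pauliString N i).trace / 2 ^ N)
    (hdecomp : A = ∑ i : Fin N → Fin 4, a i • pauliString N i) :
    (∫ U : Fin N → Matrix.unitaryGroup (Fin 2) ℂ,
        (star ((tensorU N U).mulVec ψ₀) ⬝ᵥ A.mulVec ((tensorU N U).mulVec ψ₀)) ^ 2
        ∂(Measure.pi fun _ => μ))
      = (A.trace / 2 ^ N) ^ 2
        + ∑ i ∈ Finset.univ.filter (fun i : Fin N → Fin 4 => i ≠ fun _ => 0),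
            a i ^ 2 * (projTwo N ψ₀ * pairOp N i).trace := by
  exact stmt_6_general N μ ψ₀ hψ₀ A a ha
end
end

section
/- Let d ≥ 1 and k ≥ 1, and let ψ = U·e₀ where U is a Haar-random element of U(d) and e₀ ∈ ℂ^d is any fixed unit vector (so ψ is a Haar-random pure state). Then E[|ψ⟩⟨ψ|^{⊗k}] = (Σ_{σ∈S_k} W_σ) / (d(d+1)(d+2)···(d+k−1)), where W_σ is the permutation operator on (ℂ^d)^{⊗k} associated to σ ∈ S_k. -/
open Matrix MeasureTheory

noncomputable section

/-- The permutation operator `W_σ` on `(ℂ^d)^{⊗k}`, acting on product vectors by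
`W_σ(v₁⊗···⊗v_k) = v_{σ⁻¹(1)}⊗···⊗v_{σ⁻¹(k)}`. -/
def permOp (d k : ℕ) (σ : Equiv.Perm (Fin k)) :
    Matrix (Fin k → Fin d) (Fin k → Fin d) ℂ :=
  fun x y => if ∀ t, x t = y (σ⁻¹ t) then 1 else 0

/-!
Integrating polynomials in `z` and `w = z̄` against the law of a random unit vector gives a linear
functional `L` that is invariant under `U(d)`. Differentiating this invariance along one-parameter
groups shows that `L` vanishes on the image of every derivation induced by a skew-Hermitian matrix.
These span `𝔤𝔩` over `ℂ`, so `L` also vanishes on the image of every `z_b ∂/∂z_a - w_a ∂/∂w_b`.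
Applying this to `z_j q` with `a = j`, `b = i` and summing over `j`, Euler's identity and
`∑ z_j w_j = 1` give the integration by parts formula `(d + n) L(z_i q) = L(∂q/∂w_i)` for `q` of
degree `n` in `z`. On monomials it becomes the Laplace expansion of the permanent of the matrix with
entries `δ_{y s, x t}`, which is the `(x, y)` entry of `∑ W_σ`.
-/

open MvPolynomial ProbabilityTheory

theorem permanent_succ_column_zero {R : Type*} [CommSemiring R] {n : ℕ}
    (A : Matrix (Fin (n + 1)) (Fin (n + 1)) R) :
    A.permanent = ∑ i, A i 0 * (A.submatrix i.succAbove Fin.succ).permanent := by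
  rw [permanent, ← Equiv.Perm.decomposeFin.symm.sum_comp, Fintype.sum_prod_type]
  refine Finset.sum_congr rfl fun i _ => ?_
  simp only [Fin.prod_univ_succ, Equiv.Perm.decomposeFin_symm_apply_zero,
    Equiv.Perm.decomposeFin_symm_apply_succ, ← Finset.mul_sum]
  congr 1
  induction i using Fin.cases with
  | zero => simp [permanent]
  | succ i =>
    rw [← permanent_permute_cols i.cycleRange]
    simp [permanent, Fin.succAbove_cycleRange]

theorem derivation_prod_univ_succAbove {R A M : Type*} [CommSemiring R] [CommSemiring A]
    [AddCommMonoid M] [Algebra R A] [Module A M] [Module R M] (D : Derivation R A M) {n : ℕ}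
    (f : Fin (n + 1) → A) :
    D (∏ i, f i) = ∑ i, (∏ j, f (i.succAbove j)) • D (f i) := by
  induction n with
  | zero => simp
  | succ n ih =>
    rw [Fin.prod_univ_succ, D.leibniz, ih, Fin.sum_univ_succ (n := n + 1), add_comm,
      Finset.smul_sum]
    simp [Fin.prod_univ_succ (n := n), smul_smul]

section GeneralLinear

variable {ι R : Type*} [CommRing R]

/-- The action of the matrix unit `E a b` of `𝔤𝔩(ι)` as a derivation of polynomials in a vector
`z` and a dual vector `w`, namely `z_b ∂/∂z_a - w_a ∂/∂w_b`. The coordinates of `z` are the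
variables `X (inl i)` and those of `w` are `X (inr i)`; for complex vectors `w` plays the role of
`z̄`. -/
def glDerivation (a b : ι) :
    Derivation R (MvPolynomial (ι ⊕ ι) R) (MvPolynomial (ι ⊕ ι) R) :=
  (X (.inl b) : MvPolynomial (ι ⊕ ι) R) • pderiv (.inl a)
    - (X (.inr a) : MvPolynomial (ι ⊕ ι) R) • pderiv (.inr b)

variable [Fintype ι]

theorem mkDerivation_fromBlocks_neg_transpose_apply (B : Matrix ι ι R)
    (p : MvPolynomial (ι ⊕ ι) R) :
    mkDerivation R (fromBlocks B 0 0 (-Bᵀ)).toMvPolynomial p =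
      ∑ a, ∑ b, B a b • glDerivation a b p := by
  classical
  have sum_apply (D : ι → Derivation R (MvPolynomial (ι ⊕ ι) R) (MvPolynomial (ι ⊕ ι) R))
      (q : MvPolynomial (ι ⊕ ι) R) : (∑ a, D a) q = ∑ a, D a q := by
    rw [← Derivation.coeFnAddMonoidHom_apply, map_sum, Finset.sum_apply]
    rfl
  suffices h : mkDerivation R (fromBlocks B 0 0 (-Bᵀ)).toMvPolynomial =
      ∑ a, ∑ b, B a b • glDerivation a b by
    simp only [h, sum_apply, Derivation.smul_apply]
  ext1 i
  rcases i with i | i <;>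
    simp [sum_apply, glDerivation, toMvPolynomial, smul_eq_C_mul, C_mul_X_eq_monomial,
      Pi.single_apply, smul_sub]

theorem sum_glDerivation_X_mul {q : MvPolynomial (ι ⊕ ι) R} {n : ℕ}
    (hq : q.IsWeightedHomogeneous (Sum.elim 1 0 : ι ⊕ ι → ℕ) n) (i : ι) :
    ∑ j, glDerivation j i (X (.inl j) * q) =
      (Fintype.card ι + n) • (X (.inl i) * q)
        - (∑ j, X (.inl j) * X (.inr j)) * pderiv (.inr i) q := by
  have euler : ∑ j, X (.inl j) * pderiv (.inl j) q = n • q := by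
    simpa using hq.sum_weight_X_mul_pderiv
  have h (j : ι) : glDerivation j i (X (.inl j) * q) =
      X (.inl i) * q + X (.inl i) * (X (.inl j) * pderiv (.inl j) q)
        - X (.inl j) * X (.inr j) * pderiv (.inr i) q := by
    simp only [glDerivation, Derivation.sub_apply, Derivation.smul_apply, Derivation.leibniz,
      smul_eq_mul, pderiv_X_self, pderiv_X_of_ne Sum.inl_ne_inr]
    ring
  simp only [h, Finset.sum_sub_distrib, Finset.sum_add_distrib, ← Finset.mul_sum, euler,
    ← Finset.sum_mul, Finset.sum_const, Finset.card_univ, add_smul, mul_smul_comm]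

end GeneralLinear

section BihomogeneousMonomials

variable {R ι κ α β : Type*} [CommSemiring R] [Fintype α] [Fintype β]

theorem isWeightedHomogeneous_prod_X_inl_mul_prod_X_inr (x : α → ι) (y : β → κ) :
    ((∏ t, X (.inl (x t))) * ∏ t, X (.inr (y t)) : MvPolynomial (ι ⊕ κ) R).IsWeightedHomogeneous
      (Sum.elim 1 0 : ι ⊕ κ → ℕ) (Fintype.card α) := by
  have hinl := IsWeightedHomogeneous.prod Finset.univ
    (fun t => (X (.inl (x t)) : MvPolynomial (ι ⊕ κ) R)) _
    fun t _ => isWeightedHomogeneous_X R (Sum.elim 1 0 : ι ⊕ κ → ℕ) (.inl (x t))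
  have hinr := IsWeightedHomogeneous.prod Finset.univ
    (fun t => (X (.inr (y t)) : MvPolynomial (ι ⊕ κ) R)) _
    fun t _ => isWeightedHomogeneous_X R (Sum.elim 1 0 : ι ⊕ κ → ℕ) (.inr (y t))
  simpa using hinl.mul hinr

theorem pderiv_inr_prod_X_inl_mul_prod_X_inr [DecidableEq κ] {n : ℕ} (x : α → ι)
    (y : Fin (n + 1) → κ) (b : κ) :
    pderiv (.inr b) ((∏ t, X (.inl (x t))) * ∏ t, X (.inr (y t)) : MvPolynomial (ι ⊕ κ) R) =
      ∑ s, (1 : Matrix κ κ R) (y s) b •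
        ((∏ t, X (.inl (x t))) * ∏ t, X (.inr (y (s.succAbove t)))) := by
  have hinl : pderiv (.inr b) (∏ t, X (.inl (x t)) : MvPolynomial (ι ⊕ κ) R) = 0 := by
    have hvars : .inr b ∉ (rename .inl (∏ t, X (x t)) : MvPolynomial (ι ⊕ κ) R).vars := fun h => by
      obtain ⟨a, -, ha⟩ := mem_vars_rename _ _ h
      exact Sum.inl_ne_inr ha
    simpa only [map_prod, rename_X] using pderiv_eq_zero_of_notMem_vars hvars
  rw [Derivation.leibniz, hinl, smul_zero, add_zero, derivation_prod_univ_succAbove,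
    Finset.smul_sum]
  refine Finset.sum_congr rfl fun s _ => ?_
  classical
  simp [pderiv_X, Pi.single_apply, one_apply, eq_comm]

end BihomogeneousMonomials

theorem eval_aeval_toMvPolynomial {R σ τ : Type*} [CommSemiring R] [Fintype τ]
    (M : Matrix σ τ R) (v : τ → R) (p : MvPolynomial σ R) :
    eval v (aeval M.toMvPolynomial p) = eval (M *ᵥ v) p := by
  simp only [aeval_eq_bind₁, eval, eval₂Hom_bind₁]
  congr 2
  exact funext fun i => M.toMvPolynomial_eval_eq_apply i v

theorem hasDerivAt_apply_aeval_toMvPolynomial {𝕜 K σ : Type*} [NontriviallyNormedField 𝕜]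
    [NormedField K] [NormedAlgebra 𝕜 K] [Fintype σ] [DecidableEq σ]
    {M : 𝕜 → Matrix σ σ K} {A : Matrix σ σ K} {t₀ : 𝕜} (hM₀ : M t₀ = 1)
    (hM : ∀ i j, HasDerivAt (fun t => M t i j) (A i j) t₀)
    (L : MvPolynomial σ K →ₗ[K] K) (p : MvPolynomial σ K) :
    HasDerivAt (fun t => L (aeval (M t).toMvPolynomial p))
      (L (mkDerivation K A.toMvPolynomial p)) t₀ := by
  induction p using MvPolynomial.induction_on generalizing L with
  | C c => simpa using hasDerivAt_const t₀ (L (C c))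
  | add p q hp hq => simpa using (hp L).fun_add (hq L)
  | mul_X p i hp =>
    have expand (N : Matrix σ σ K) (q : MvPolynomial σ K) :
        L (q * N.toMvPolynomial i) = ∑ j, N i j * L (q * X j) := by
      simp only [toMvPolynomial, ← C_mul_X_eq_monomial, Finset.mul_sum, map_sum]
      refine Finset.sum_congr rfl fun j _ => ?_
      rw [← smul_eq_C_mul, mul_smul_comm, map_smul, smul_eq_mul]
    have hsum := HasDerivAt.fun_sum fun j (_ : j ∈ Finset.univ) =>
      (hM i j).mul (hp (L ∘ₗ LinearMap.mulRight K (X j)))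
    convert! hsum using 1
    · funext t
      simp [expand]
    · simp [hM₀, Finset.sum_add_distrib, expand, one_apply, mul_comm (X i)]

section UnitaryInvariance

variable {ι : Type*} [Fintype ι] [DecidableEq ι]

/-- A linear functional on polynomials in `z` (variables `inl`) and `z̄` (variables `inr`) is
unitarily invariant if it does not see the substitution `z ↦ V z`, `z̄ ↦ V̄ z̄` for unitary `V`. -/
def IsUnitarilyInvariant (L : MvPolynomial (ι ⊕ ι) ℂ →ₗ[ℂ] ℂ) : Prop :=
  ∀ V ∈ unitaryGroup ι ℂ, ∀ p,
    L (aeval (fromBlocks V 0 0 (V.map star)).toMvPolynomial p) = L p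

open scoped Matrix.Norms.L2Operator in
theorem exists_unitary_curve_hasDerivAt {A : Matrix ι ι ℂ} (hA : A ∈ skewAdjoint (Matrix ι ι ℂ)) :
    ∃ V : ℝ → Matrix ι ι ℂ, (∀ t, V t ∈ unitaryGroup ι ℂ) ∧ V 0 = 1 ∧
      ∀ i j, HasDerivAt (fun t => V t i j) (A i j) 0 := by
  let _ : NormedAlgebra ℚ (Matrix ι ι ℂ) := .restrictScalars ℚ ℂ _
  refine ⟨fun t => NormedSpace.exp (t • A), fun t => ?_, by simp, fun i j => ?_⟩
  · exact NormedSpace.exp_mem_unitary_of_mem_skewAdjoint (skewAdjoint.smul_mem t hA)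
  · have hexp := hasDerivAt_exp_smul_const A (0 : ℝ)
    simpa [Function.comp_def] using
      (entryLinearMap ℝ ℂ i j).toContinuousLinearMap.hasFDerivAt.comp_hasDerivAt 0 hexp

namespace IsUnitarilyInvariant

variable {L : MvPolynomial (ι ⊕ ι) ℂ →ₗ[ℂ] ℂ}

theorem apply_mkDerivation_of_mem_skewAdjoint (hL : IsUnitarilyInvariant L) {A : Matrix ι ι ℂ}
    (hA : A ∈ skewAdjoint (Matrix ι ι ℂ)) (p : MvPolynomial (ι ⊕ ι) ℂ) :
    L (mkDerivation ℂ (fromBlocks A 0 0 (-Aᵀ)).toMvPolynomial p) = 0 := by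
  obtain ⟨V, hV, hV₀, hVA⟩ := exists_unitary_curve_hasDerivAt hA
  have star_entry (i j : ι) : star (A i j) = -A j i :=
    congr_arg (fun M : Matrix ι ι ℂ => M j i) (skewAdjoint.mem_iff.1 hA)
  refine HasDerivAt.unique (hasDerivAt_apply_aeval_toMvPolynomial
    (t₀ := 0) (M := fun t : ℝ => fromBlocks (V t) 0 0 ((V t).map star)) ?_ ?_ L p) ?_
  · simp [hV₀]
  · rintro (i | i) (j | j)
    · exact hVA i j
    · exact hasDerivAt_const _ _
    · exact hasDerivAt_const _ _
    · simpa [star_entry] using (hVA i j).star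
  · simpa only [hL _ (hV _)] using hasDerivAt_const (0 : ℝ) (L p)

theorem apply_glDerivation (hL : IsUnitarilyInvariant L) (a b : ι)
    (p : MvPolynomial (ι ⊕ ι) ℂ) : L (glDerivation a b p) = 0 := by
  let F : Matrix ι ι ℂ →ₗ[ℂ] ℂ :=
    ∑ a, ∑ b, (entryLinearMap ℂ ℂ a b).smulRight (L (glDerivation a b p))
  have F_apply (B : Matrix ι ι ℂ) :
      F B = L (mkDerivation ℂ (fromBlocks B 0 0 (-Bᵀ)).toMvPolynomial p) := by
    simp [F, mkDerivation_fromBlocks_neg_transpose_apply]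
  have F_selfAdjoint : Set.EqOn F 0 (selfAdjoint (Matrix ι ι ℂ)) := fun H hH => by
    have hIH : F (Complex.I • H) = 0 := by
      rw [F_apply]
      exact hL.apply_mkDerivation_of_mem_skewAdjoint
        (IsSelfAdjoint.smul_mem_skewAdjoint Complex.conj_I hH) p
    simpa using hIH
  have F_eq_zero : F = 0 := LinearMap.ext_on span_selfAdjoint F_selfAdjoint
  simpa [F, single_apply, ite_and] using LinearMap.congr_fun F_eq_zero (single a b 1)

theorem card_add_mul_apply_X_inl_mul (hL : IsUnitarilyInvariant L)
    (hsphere : ∀ p, L ((∑ i, X (.inl i) * X (.inr i)) * p) = L p)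
    {q : MvPolynomial (ι ⊕ ι) ℂ} {n : ℕ}
    (hq : q.IsWeightedHomogeneous (Sum.elim 1 0 : ι ⊕ ι → ℕ) n) (i : ι) :
    (Fintype.card ι + n) * L (X (.inl i) * q) = L (pderiv (.inr i) q) := by
  have h := congr_arg L (sum_glDerivation_X_mul hq i)
  simp only [map_sum, hL.apply_glDerivation, Finset.sum_const_zero, map_sub, hsphere,
    ← Nat.cast_smul_eq_nsmul ℂ, map_smul, smul_eq_mul, Nat.cast_add] at h
  exact sub_eq_zero.1 h.symm

theorem ascFactorial_mul_apply_prod_X_mul_prod_X (hL : IsUnitarilyInvariant L)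
    (hsphere : ∀ p, L ((∑ i, X (.inl i) * X (.inr i)) * p) = L p) (hone : L 1 = 1) {k : ℕ}
    (x y : Fin k → ι) :
    (Fintype.card ι).ascFactorial k * L ((∏ t, X (.inl (x t))) * ∏ t, X (.inr (y t))) =
      ((1 : Matrix ι ι ℂ).submatrix y x).permanent := by
  induction k with
  | zero => simp [hone, permanent_isEmpty]
  | succ n ih =>
    set q : MvPolynomial (ι ⊕ ι) ℂ :=
      (∏ t : Fin n, X (.inl (x t.succ))) * ∏ t, X (.inr (y t)) with q_def
    have hq : q.IsWeightedHomogeneous (Sum.elim 1 0 : ι ⊕ ι → ℕ) n := by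
      simpa [q_def, Fin.tail] using
        isWeightedHomogeneous_prod_X_inl_mul_prod_X_inr (R := ℂ) (Fin.tail x) y
    calc
      _ = (Fintype.card ι).ascFactorial n * ((Fintype.card ι + n) * L (X (.inl (x 0)) * q)) := by
          rw [q_def, Fin.prod_univ_succ, Nat.ascFactorial_succ]
          push_cast
          ring_nf
      _ = ∑ s, (1 : Matrix ι ι ℂ) (y s) (x 0) *
          ((Fintype.card ι).ascFactorial n * L ((∏ t : Fin n, X (.inl (x t.succ))) *
            ∏ t, X (.inr (y (s.succAbove t))))) := by
          rw [hL.card_add_mul_apply_X_inl_mul hsphere hq, q_def,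
            pderiv_inr_prod_X_inl_mul_prod_X_inr, map_sum, Finset.mul_sum]
          simp [mul_left_comm]
      _ = _ := by
          rw [permanent_succ_column_zero]
          exact Finset.sum_congr rfl fun s _ => congr_arg _ (ih _ _)

end IsUnitarilyInvariant

end UnitaryInvariance

section RandomUnitVector

theorem integrable_comp_of_continuous_of_ae_norm_le {Ω E F : Type*} [MeasurableSpace Ω]
    {μ : Measure Ω} [IsFiniteMeasure μ] [NormedAddCommGroup E] [ProperSpace E]
    [NormedAddCommGroup F] {f : E → F} (hf : Continuous f) {ψ : Ω → E}
    (hψ : AEStronglyMeasurable ψ μ) {C : ℝ} (hC : ∀ᵐ ω ∂μ, ‖ψ ω‖ ≤ C) :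
    Integrable (fun ω => f (ψ ω)) μ := by
  obtain ⟨D, hD⟩ := (isCompact_closedBall (0 : E) C).exists_bound_of_continuousOn hf.continuousOn
  refine .of_bound (hf.comp_aestronglyMeasurable hψ) D ?_
  filter_upwards [hC] with ω hω using hD _ (mem_closedBall_zero_iff.2 hω)

theorem norm_le_one_of_star_dotProduct_self {𝕜 ι : Type*} [RCLike 𝕜] [Fintype ι] {v : ι → 𝕜}
    (hv : star v ⬝ᵥ v = 1) : ‖v‖ ≤ 1 := by
  have hnormSq : ‖WithLp.toLp 2 v‖ ^ 2 = 1 := by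
    rw [← inner_self_eq_norm_sq (𝕜 := 𝕜), EuclideanSpace.inner_toLp_toLp, dotProduct_comm, hv,
      RCLike.one_re]
  have hnorm := (pow_eq_one_iff_of_nonneg (norm_nonneg _) two_ne_zero).1 hnormSq
  exact (pi_norm_le_iff_of_nonneg zero_le_one).2 fun i =>
    hnorm ▸ PiLp.norm_apply_le (WithLp.toLp 2 v) i

theorem fromBlocks_map_star_mulVec_sumElim_star {R m n : Type*} [CommSemiring R] [StarRing R]
    [Fintype n] (V : Matrix m n R) (v : n → R) :
    fromBlocks V 0 0 (V.map star) *ᵥ Sum.elim v (star v) = Sum.elim (V *ᵥ v) (star (V *ᵥ v)) := by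
  rw [fromBlocks_mulVec, star_mulVec, conjTranspose, transpose_map, vecMul_transpose]
  simp

variable {Ω ι : Type*} [MeasurableSpace Ω]

/-- The linear functional `p ↦ 𝔼[p(ψ, ψ̄)]` recording the mixed moments of a random vector `ψ`. The
integrability of all moments is an argument because the Bochner integral is additive only then. -/
def momentFunctional (μ : Measure Ω) (ψ : Ω → ι → ℂ)
    (hint : ∀ p, Integrable (fun ω => eval (Sum.elim (ψ ω) (star (ψ ω))) p) μ) :
    MvPolynomial (ι ⊕ ι) ℂ →ₗ[ℂ] ℂ where
  toFun p := ∫ ω, eval (Sum.elim (ψ ω) (star (ψ ω))) p ∂μ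
  map_add' p q := by simp only [map_add, integral_add (hint p) (hint q)]
  map_smul' c p := by simp only [smul_eval, integral_const_mul, RingHom.id_apply, smul_eq_mul]

theorem continuous_eval_sumElim_star (p : MvPolynomial (ι ⊕ ι) ℂ) :
    Continuous fun v : ι → ℂ => eval (Sum.elim v (star v)) p :=
  (continuous_eval p).comp <| continuous_pi <| Sum.rec continuous_apply
    fun i => (continuous_apply i).star

variable [Fintype ι] {μ : Measure Ω} {ψ : Ω → ι → ℂ}
    {hint : ∀ p, Integrable (fun ω => eval (Sum.elim (ψ ω) (star (ψ ω))) p) μ}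

theorem isUnitarilyInvariant_momentFunctional [DecidableEq ι]
    (hinv : ∀ V ∈ unitaryGroup ι ℂ, IdentDistrib (fun ω => V *ᵥ ψ ω) ψ μ μ) :
    IsUnitarilyInvariant (momentFunctional μ ψ hint) := fun V hV p => by
  simp only [momentFunctional, LinearMap.coe_mk, AddHom.coe_mk,
    eval_aeval_toMvPolynomial, fromBlocks_map_star_mulVec_sumElim_star]
  exact ((hinv V hV).comp (continuous_eval_sumElim_star p).measurable).integral_eq

theorem momentFunctional_sum_X_mul_X_mul (hunit : ∀ᵐ ω ∂μ, star (ψ ω) ⬝ᵥ ψ ω = 1)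
    (p : MvPolynomial (ι ⊕ ι) ℂ) :
    momentFunctional μ ψ hint ((∑ i, X (.inl i) * X (.inr i)) * p) =
      momentFunctional μ ψ hint p := by
  refine integral_congr_ae ?_
  filter_upwards [hunit] with ω hω
  have hnormSq : ∑ i, ψ ω i * star (ψ ω i) = 1 := by simpa [dotProduct, mul_comm] using hω
  simp only [map_mul, map_sum, eval_X, Sum.elim_inl, Sum.elim_inr, Pi.star_apply, hnormSq, one_mul]

end RandomUnitVector

theorem stmt_8_general {Ω ι : Type*} [MeasurableSpace Ω] [Fintype ι] [DecidableEq ι]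
    {μ : Measure Ω} [IsProbabilityMeasure μ] {ψ : Ω → ι → ℂ}
    (hinv : ∀ V ∈ unitaryGroup ι ℂ, IdentDistrib (fun ω => V *ᵥ ψ ω) ψ μ μ)
    (hunit : ∀ᵐ ω ∂μ, star (ψ ω) ⬝ᵥ ψ ω = 1) {k : ℕ} (x y : Fin k → ι) :
    ∫ ω, ∏ t, (ψ ω (x t) * starRingEnd ℂ (ψ ω (y t))) ∂μ =
      ((1 : Matrix ι ι ℂ).submatrix y x).permanent /
        ∏ j ∈ Finset.range k, ((Fintype.card ι : ℂ) + j) := by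
  have hψ : AEMeasurable ψ μ := (hinv 1 (one_mem _)).aemeasurable_snd
  have hint (p : MvPolynomial (ι ⊕ ι) ℂ) :=
    integrable_comp_of_continuous_of_ae_norm_le (continuous_eval_sumElim_star p)
      hψ.aestronglyMeasurable (hunit.mono fun _ => norm_le_one_of_star_dotProduct_self)
  have : Nonempty ι := not_isEmpty_iff.1 fun _ => by
    obtain ⟨ω, hω⟩ := hunit.exists
    simp at hω
  have hL : IsUnitarilyInvariant (momentFunctional μ ψ hint) :=
    isUnitarilyInvariant_momentFunctional hinv
  have hmoment := hL.ascFactorial_mul_apply_prod_X_mul_prod_X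
    (momentFunctional_sum_X_mul_X_mul hunit) (by simp [momentFunctional]) x y
  have hdenom : ∏ j ∈ Finset.range k, ((Fintype.card ι : ℂ) + j) ≠ 0 :=
    Finset.prod_ne_zero_iff.2 fun j _ => mod_cast (Nat.add_pos_left Fintype.card_pos j).ne'
  rw [eq_div_iff hdenom, mul_comm, ← hmoment, Nat.ascFactorial_eq_prod_range]
  simp [momentFunctional, Finset.prod_mul_distrib]

section Haar

variable {ι : Type*} [Fintype ι] [DecidableEq ι]

theorem identDistrib_mulVec_unitaryGroup [MeasurableSpace (unitaryGroup ι ℂ)]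
    [BorelSpace (unitaryGroup ι ℂ)] (μ : Measure (unitaryGroup ι ℂ)) [μ.IsMulLeftInvariant]
    (e : ι → ℂ) {V : Matrix ι ι ℂ} (hV : V ∈ unitaryGroup ι ℂ) :
    IdentDistrib (fun U : unitaryGroup ι ℂ => V *ᵥ ((U : Matrix ι ι ℂ) *ᵥ e))
      (fun U : unitaryGroup ι ℂ => (U : Matrix ι ι ℂ) *ᵥ e) μ μ := by
  have horbit : Measurable fun U : unitaryGroup ι ℂ => (U : Matrix ι ι ℂ) *ᵥ e :=
    (continuous_subtype_val.matrix_mulVec continuous_const).measurable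
  have htranslate : Measurable fun U : unitaryGroup ι ℂ => ⟨V, hV⟩ * U := measurable_const_mul _
  have hcomp : (fun U : unitaryGroup ι ℂ => V *ᵥ ((U : Matrix ι ι ℂ) *ᵥ e)) =
      (fun U : unitaryGroup ι ℂ => (U : Matrix ι ι ℂ) *ᵥ e) ∘ (⟨V, hV⟩ * ·) := by
    simp [Function.comp_def]
  refine ⟨hcomp ▸ (horbit.comp htranslate).aemeasurable, horbit.aemeasurable, ?_⟩
  rw [hcomp, ← Measure.map_map horbit htranslate, map_mul_left_eq_self]

theorem star_mulVec_dotProduct_mulVec_of_mem_unitaryGroup {R : Type*} [CommRing R] [StarRing R]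
    {U : Matrix ι ι R} (hU : U ∈ unitaryGroup ι R) (v w : ι → R) :
    star (U *ᵥ v) ⬝ᵥ (U *ᵥ w) = star v ⬝ᵥ w := by
  rw [star_mulVec, ← dotProduct_mulVec, mulVec_mulVec, ← star_eq_conjTranspose,
    mem_unitaryGroup_iff'.1 hU, one_mulVec]

end Haar

theorem sum_permOp_apply (d k : ℕ) (x y : Fin k → Fin d) :
    ∑ σ, permOp d k σ x y = ((1 : Matrix (Fin d) (Fin d) ℂ).submatrix y x).permanent := by
  rw [permanent, ← Equiv.sum_comp (Equiv.inv (Equiv.Perm (Fin k)))]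
  refine Finset.sum_congr rfl fun σ _ => ?_
  simp [permOp, one_apply, Finset.prod_ite_zero, eq_comm]

/-- Moments of a Haar-random pure state `ψ = U e₀`:
`E[|ψ⟩⟨ψ|^{⊗k}] = (Σ_{σ∈S_k} W_σ)/(d(d+1)⋯(d+k−1))`, entrywise.  The Haar
probability measure on `U(d)` is any left-invariant Borel probability measure. -/
theorem stmt_8 (d k : ℕ) (hd : 1 ≤ d) (hk : 1 ≤ k)
    [MeasurableSpace (Matrix.unitaryGroup (Fin d) ℂ)]
    [BorelSpace (Matrix.unitaryGroup (Fin d) ℂ)]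
    (μ : Measure (Matrix.unitaryGroup (Fin d) ℂ))
    [IsProbabilityMeasure μ] [μ.IsMulLeftInvariant]
    (e₀ : Fin d → ℂ) (he₀ : star e₀ ⬝ᵥ e₀ = 1) :
    ∀ x y : Fin k → Fin d,
      (∫ U : Matrix.unitaryGroup (Fin d) ℂ,
          ∏ t, ((U : Matrix (Fin d) (Fin d) ℂ).mulVec e₀ (x t)
            * starRingEnd ℂ ((U : Matrix (Fin d) (Fin d) ℂ).mulVec e₀ (y t))) ∂μ)
        = (∑ σ : Equiv.Perm (Fin k), permOp d k σ x y)
            / ∏ j ∈ Finset.range k, ((d : ℂ) + j) := by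
  intro x y
  rw [sum_permOp_apply]
  simpa only [Fintype.card_fin] using stmt_8_general
    (fun V hV => identDistrib_mulVec_unitaryGroup μ e₀ hV)
    (.of_forall fun U => (star_mulVec_dotProduct_mulVec_of_mem_unitaryGroup U.2 _ _).trans he₀) x y
end
end

section
/- Let d ≥ 1 and M ∈ M_d(ℂ), and let ψ = U·e₀ be a Haar-random pure state in ℂ^d (U Haar-random in U(d), e₀ a fixed unit vector). Then E[⟨ψ|M|ψ⟩³] = ((Tr M)³ + 3·Tr(M²)·Tr(M) + 2·Tr(M³)) / (d(d+1)(d+2)). -/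
open Matrix MeasureTheory

/-!
Let `X` be a Haar-random pure state. By unitary invariance `E |⟨v, X⟩| ^ (2 * k)` depends on `v`
only through its norm, so it is `c * ‖v‖ ^ (2 * k)`. Both sides are diagonal values of forms that
are antilinear in `k` and linear in `k` variables, so polarization gives
`E ∏ i, ⟨p i, X⟩ * ∏ j, ⟨X, q j⟩ = c * permanent (⟨p i, q j⟩)`. Expanding `⟨X, T i X⟩` in an
orthonormal basis turns this into a sum over permutations of traces along cycles, and taking every
`T i` to be the identity, where the left-hand side is `1`, determines `c`.
-/

open Finset Equiv
open scoped Nat InnerProductSpace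

section Permanent

variable {ι R : Type*} [Fintype ι] [DecidableEq ι] [CommRing R]

/-- Ryser's formula: surjective maps `ι → ι` are counted by inclusion-exclusion. -/
theorem permanent_eq_sum_neg_one_pow_card_mul_prod_sum_compl (A : Matrix ι ι R) :
    A.permanent = ∑ t : Finset ι, (-1) ^ #t * ∏ i, ∑ j ∈ tᶜ, A i j := by
  have avoiding (t : Finset ι) :
      t.inf (fun j ↦ ({f | ∀ i, f i ≠ j} : Finset (ι → ι))) = Fintype.piFinset fun _ ↦ tᶜ := by
    ext f
    simp only [mem_inf, mem_filter_univ, Fintype.mem_piFinset, mem_compl]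
    grind
  have surjective : (univ : Finset ι).inf (fun j ↦ ({f | ∀ i, f i ≠ j} : Finset (ι → ι))ᶜ)
      = ({f | Function.Surjective f} : Finset (ι → ι)) := by
    ext f
    simp only [mem_inf, mem_univ, mem_compl, mem_filter_univ, true_imp_iff, not_forall, not_not]
    rfl
  calc
    A.permanent = ∑ σ : Perm ι, ∏ i, A i (σ i) := by
      rw [← permanent_transpose]; rfl
    _ = ∑ f : ι → ι with Function.Surjective f, ∏ i, A i (f i) :=
      sum_bij (fun σ _ ↦ σ) (fun σ _ ↦ by simpa using σ.surjective)
        (fun _ _ _ _ h ↦ DFunLike.coe_injective h)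
        (fun f hf ↦ ⟨.ofBijective f ((mem_filter_univ f).1 hf).bijective_of_finite, by simp⟩)
        (fun _ _ ↦ rfl)
    _ = ∑ t : Finset ι, (-1) ^ #t * ∏ i, ∑ j ∈ tᶜ, A i j := by
      rw [← surjective, inclusion_exclusion_sum_inf_compl, powerset_univ]
      refine sum_congr rfl fun t _ ↦ ?_
      rw [avoiding, ← prod_univ_sum (fun _ ↦ tᶜ) fun i j ↦ A i j, zsmul_eq_mul]
      simp

theorem factorial_card_mul_prod_eq_sum_neg_one_pow_card_mul_sum_pow (a : ι → R) :
    (Fintype.card ι)! * ∏ i, a i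
      = ∑ t : Finset ι, (-1) ^ #t * (∑ i ∈ tᶜ, a i) ^ Fintype.card ι := by
  have ryser := permanent_eq_sum_neg_one_pow_card_mul_prod_sum_compl (of fun _ j : ι ↦ a j)
  rw [← permanent_transpose] at ryser
  simpa [permanent, Equiv.prod_comp, Fintype.card_perm] using ryser

end Permanent

section RootsOfUnity

theorem sum_eval_pow_of_isPrimitiveRoot {R : Type*} [CommRing R] [IsDomain R] {N : ℕ} {ζ : R}
    (hζ : IsPrimitiveRoot ζ N) {P : Polynomial R} (hP : P.natDegree < N) :
    ∑ j ∈ range N, P.eval (ζ ^ j) = N * P.eval 0 := by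
  have sum_pow_eq_zero (i : ℕ) (hi : i ∈ range N) (hi0 : i ≠ 0) :
      ∑ j ∈ range N, (ζ ^ j) ^ i = 0 := by
    have hne : ζ ^ i ≠ 1 := hζ.pow_ne_one_of_pos_of_lt hi0 (mem_range.1 hi)
    have hgeom := mul_geom_sum (ζ ^ i) N
    rw [pow_right_comm, hζ.pow_eq_one, one_pow, sub_self] at hgeom
    simpa only [pow_right_comm] using (mul_eq_zero.1 hgeom).resolve_left (sub_ne_zero.2 hne)
  calc
    ∑ j ∈ range N, P.eval (ζ ^ j)
      = ∑ i ∈ range N, P.coeff i * ∑ j ∈ range N, (ζ ^ j) ^ i := by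
      simp only [Polynomial.eval_eq_sum_range' hP, mul_sum]
      exact sum_comm
    _ = P.coeff 0 * ∑ j ∈ range N, (ζ ^ j) ^ 0 :=
      sum_eq_single_of_mem 0 (mem_range.2 (Nat.zero_lt_of_lt hP)) fun i hi hi0 ↦ by
        rw [sum_pow_eq_zero i hi hi0, mul_zero]
    _ = N * P.eval 0 := by
      simp [Polynomial.coeff_zero_eq_eval_zero, mul_comm]

theorem sum_mul_inner_map_add_smul_pow {E : Type*} [SeminormedAddCommGroup E]
    [InnerProductSpace ℂ E] {k : ℕ} {ζ : ℂ} (hζ : IsPrimitiveRoot ζ (2 * k + 1))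
    (T : E →ₗ[ℂ] E) (x y : E) :
    ∑ j ∈ range (2 * k + 1), (ζ ^ j * ⟪y + ζ ^ j • x, T (y + ζ ^ j • x)⟫_ℂ) ^ k
      = (2 * k + 1) * ⟪x, T y⟫_ℂ ^ k := by
  -- As `conj (ζ ^ j)` is the inverse of `ζ ^ j`, the `j`-th summand is a polynomial in `ζ ^ j`.
  let P : Polynomial ℂ := (.C ⟪x, T y⟫_ℂ + .C (⟪y, T y⟫_ℂ + ⟪x, T x⟫_ℂ) * .X
    + .C ⟪y, T x⟫_ℂ * .X ^ 2) ^ k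
  have hP : P.natDegree < 2 * k + 1 := by
    refine Nat.lt_succ_of_le ?_
    rw [mul_comm]
    exact Polynomial.natDegree_pow_le_of_le k (by compute_degree)
  have hPζ (j : ℕ) : (ζ ^ j * ⟪y + ζ ^ j • x, T (y + ζ ^ j • x)⟫_ℂ) ^ k = P.eval (ζ ^ j) := by
    have hconj : starRingEnd ℂ (ζ ^ j) * ζ ^ j = 1 := by
      rw [Complex.conj_mul', norm_pow, hζ.norm'_eq_one (by omega)]; simp
    simp only [P, Polynomial.eval_pow, Polynomial.eval_add, Polynomial.eval_mul, Polynomial.eval_C,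
      Polynomial.eval_X, map_add, map_smul, inner_add_left, inner_add_right, inner_smul_left,
      inner_smul_right]
    congr 1
    linear_combination (⟪x, T y⟫_ℂ + ζ ^ j * ⟪x, T x⟫_ℂ) * hconj
  simp only [hPζ, sum_eval_pow_of_isPrimitiveRoot hζ hP]
  simp [P]

end RootsOfUnity

section PermTrace

theorem sum_prod_factorial_card_fiber (α : Type*) [Fintype α] [DecidableEq α] (k : ℕ) :
    ∑ f : Fin k → α, ∏ a, (#{i | f i = a})! = (Fintype.card α).ascFactorial k := by
  induction k with
  | zero => simp
  | succ k ih =>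
    have prod_cons (a : α) (f : Fin k → α) :
        ∏ b, (#{i | (Fin.cons a f : Fin (k + 1) → α) i = b})!
          = (#{i | f i = a} + 1) * ∏ b, (#{i | f i = b})! := by
      have card_cons (b : α) : #{i | (Fin.cons a f : Fin (k + 1) → α) i = b}
          = #{i | f i = b} + if b = a then 1 else 0 := by
        simp [Fin.card_filter_univ_succ, eq_comm, apply_ite]
      have prod_erase : ∏ b ∈ univ.erase a, (#{i | f i = b} + if b = a then 1 else 0)!
          = ∏ b ∈ univ.erase a, (#{i | f i = b})! :=
        prod_congr rfl fun b hb ↦ by rw [if_neg (ne_of_mem_erase hb), add_zero]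
      simp only [card_cons, ← mul_prod_erase univ _ (mem_univ a), prod_erase, if_true,
        Nat.factorial_succ, mul_assoc]
    have sum_card_fiber (f : Fin k → α) :
        ∑ a, (#{i | f i = a} + 1) = Fintype.card α + k := by
      rw [sum_add_distrib, ← card_eq_sum_card_fiberwise fun _ _ ↦ mem_coe.2 (mem_univ _)]
      simp [add_comm]
    calc
      ∑ f : Fin (k + 1) → α, ∏ b, (#{i | f i = b})!
        = ∑ f : Fin k → α, ∑ a, (#{i | f i = a} + 1) * ∏ b, (#{i | f i = b})! := by
        rw [← (Fin.consEquiv fun _ ↦ α).sum_comp, Fintype.sum_prod_type_right]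
        exact sum_congr rfl fun f _ ↦ sum_congr rfl fun a _ ↦ prod_cons a f
      _ = (Fintype.card α).ascFactorial (k + 1) := by
        simp only [← sum_mul, sum_card_fiber, ← mul_sum, ih, Nat.ascFactorial_succ]

variable {ι n R : Type*} [Fintype ι] [DecidableEq ι] [Fintype n] [CommSemiring R]

/-- The trace of `⨂ i, A i` composed with the permutation operator of `σ` on `⨂ i, Rⁿ`, written out
in coordinates. It is the product over the cycles of `σ` of the traces of the products of the `A i`
along the cycle. -/
def permTrace (σ : Perm ι) (A : ι → Matrix n n R) : R :=
  ∑ f : ι → n, ∏ i, A i (f i) (f (σ i))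

theorem permTrace_conj (σ τ : Perm ι) (A : ι → Matrix n n R) :
    permTrace (τ * σ * τ⁻¹) A = permTrace σ (A ∘ τ) := by
  refine Fintype.sum_equiv (τ.arrowCongr (.refl n)).symm _ _ fun f ↦ ?_
  rw [← Equiv.prod_comp τ]
  simp

theorem sum_permTrace_one [DecidableEq n] (k : ℕ) :
    ∑ σ : Perm (Fin k), permTrace σ (1 : Fin k → Matrix n n R)
      = (Fintype.card n).ascFactorial k := by
  have prod_one_apply (f : Fin k → n) (σ : Perm (Fin k)) :
      ∏ i, (1 : Matrix n n R) (f i) (f (σ i)) = if f ∘ σ = f then 1 else 0 := by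
    simp only [one_apply, prod_ite_zero, prod_const_one, mem_univ, true_imp_iff, funext_iff,
      Function.comp_apply, eq_comm]
  have card_stabilizer (f : Fin k → n) :
      #{σ : Perm (Fin k) | f ∘ σ = f} = ∏ a, (#{i | f i = a})! := by
    simp only [← Fintype.card_subtype, DomMulAct.stabilizer_card]
  simp only [permTrace, Pi.one_apply, prod_one_apply]
  rw [sum_comm]
  simp only [sum_boole, card_stabilizer, ← sum_prod_factorial_card_fiber, Nat.cast_sum]

theorem sum_fin_three_arrow {α M : Type*} [Fintype α] [AddCommMonoid M] (g : (Fin 3 → α) → M) :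
    ∑ f, g f = ∑ a, ∑ b, ∑ c, g ![a, b, c] := by
  simp only [← (Fin.consEquiv fun _ ↦ α).sum_comp, Fintype.sum_prod_type, Fintype.sum_unique]
  rfl

theorem sum_permTrace_fin_three (M : Matrix n n R) :
    ∑ σ : Perm (Fin 3), permTrace σ (fun _ ↦ M)
      = M.trace ^ 3 + 3 * (M * M).trace * M.trace + 2 * (M * M * M).trace := by
  have conj (σ τ : Perm (Fin 3)) :
      permTrace (τ * σ * τ⁻¹) (fun _ ↦ M) = permTrace σ fun _ ↦ M :=
    permTrace_conj σ τ _
  have univ_perm : (univ : Finset (Perm (Fin 3))) =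
      {1, swap 0 1, swap 1 2, swap 0 2, finRotate 3, (finRotate 3)⁻¹} := by
    decide
  have identity : permTrace (1 : Perm (Fin 3)) (fun _ ↦ M) = M.trace ^ 3 := by
    simp [permTrace, trace, sum_pow']
  have transposition : permTrace (swap 0 1 : Perm (Fin 3)) (fun _ ↦ M)
      = (M * M).trace * M.trace := by
    have fixed : swap (0 : Fin 3) 1 2 = 2 := by decide
    simp [permTrace, sum_fin_three_arrow, Fin.prod_univ_three, trace, mul_apply, fixed,
      ← mul_sum, sum_mul]
  have threeCycle : permTrace (finRotate 3) (fun _ ↦ M) = (M * M * M).trace := by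
    simp only [permTrace, sum_fin_three_arrow, Fin.prod_univ_three, trace, diag_apply, mul_apply,
      sum_mul]
    exact sum_congr rfl fun _ _ ↦ sum_comm
  have swap_one_two : (swap 1 2 : Perm (Fin 3)) = swap 0 2 * swap 0 1 * (swap 0 2)⁻¹ := by decide
  have swap_zero_two : (swap 0 2 : Perm (Fin 3)) = swap 1 2 * swap 0 1 * (swap 1 2)⁻¹ := by decide
  have finRotate_inv : (finRotate 3)⁻¹ = swap 0 1 * finRotate 3 * (swap 0 1)⁻¹ := by decide
  calc
    ∑ σ : Perm (Fin 3), permTrace σ (fun _ ↦ M)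
      = M.trace ^ 3 + ((M * M).trace * M.trace + ((M * M).trace * M.trace +
          ((M * M).trace * M.trace + ((M * M * M).trace + (M * M * M).trace)))) := by
      rw [univ_perm, sum_insert (by decide), sum_insert (by decide), sum_insert (by decide),
        sum_insert (by decide), sum_insert (by decide), sum_singleton, finRotate_inv, conj,
        swap_zero_two, conj, swap_one_two, conj, identity, transposition, threeCycle]
    _ = _ := by ring

end PermTrace

section Isometry

variable {𝕜 E : Type*} [RCLike 𝕜] [NormedAddCommGroup E] [InnerProductSpace 𝕜 E]
  [FiniteDimensional 𝕜 E]

theorem exists_linearIsometryEquiv_apply_eq {x y : E} (h : ‖x‖ = ‖y‖) :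
    ∃ U : E ≃ₗᵢ[𝕜] E, U x = y := by
  obtain rfl | hx := eq_or_ne x 0
  · exact ⟨.refl 𝕜 E, by simpa [eq_comm] using h⟩
  have hy : y ≠ 0 := by rwa [← norm_ne_zero_iff, ← h, norm_ne_zero_iff]
  let x₁ := (‖x‖⁻¹ : 𝕜) • x
  let y₁ := (‖y‖⁻¹ : 𝕜) • y
  have hx₁ : ‖x₁‖ = 1 := norm_smul_inv_norm hx
  have hy₁ : ‖y₁‖ = 1 := norm_smul_inv_norm hy
  obtain ⟨e, he⟩ : ∃ e : 𝕜 ≃ₗᵢ[𝕜] Submodule.span 𝕜 {x₁}, (e 1 : E) = x₁ :=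
    ⟨.toSpanUnitSingleton x₁ hx₁, by simp⟩
  let L := (LinearIsometry.toSpanSingleton 𝕜 E hy₁).comp e.symm.toLinearIsometry
  have extend_apply : L.extend x₁ = y₁ := by
    have extend_e := L.extend_apply (e 1)
    rw [he] at extend_e
    simpa [L] using extend_e
  refine ⟨L.extend.toLinearIsometryEquiv rfl, ?_⟩
  calc
    L.extend x = L.extend ((‖x‖ : 𝕜) • x₁) := by simp [x₁, hx]
    _ = (‖y‖ : 𝕜) • y₁ := by rw [map_smul, extend_apply, h]
    _ = y := by simp [y₁, hy]

end Isometry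

/-- `ν` is the law of a Haar-random pure state: a unitarily invariant probability measure carried by
the unit sphere. In positive finite dimension there is exactly one, the law of `U e` for Haar-random
`U` and any unit vector `e`; describing it by invariance makes no reference to coordinates. -/
class IsHaarPureState {E : Type*} [NormedAddCommGroup E] [InnerProductSpace ℂ E]
    [MeasurableSpace E] (ν : Measure E) : Prop extends IsProbabilityMeasure ν where
  map_eq (U : E ≃ₗᵢ[ℂ] E) : ν.map U = ν
  ae_norm_eq_one : ∀ᵐ x ∂ν, ‖x‖ = 1

namespace IsHaarPureState

variable {E : Type*} [NormedAddCommGroup E] [InnerProductSpace ℂ E]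
  [MeasurableSpace E] [BorelSpace E] (ν : Measure E) [IsHaarPureState ν]

theorem integral_comp_linearIsometryEquiv {F : Type*} [NormedAddCommGroup F] [NormedSpace ℝ F]
    (U : E ≃ₗᵢ[ℂ] E) (f : E → F) : ∫ x, f (U x) ∂ν = ∫ x, f x ∂ν := by
  conv_rhs => rw [← map_eq (ν := ν) U]
  exact (U.toHomeomorph.measurableEmbedding.integral_map f).symm

variable [FiniteDimensional ℂ E]

variable {ν} in
theorem integrable_of_continuous {F : Type*} [NormedAddCommGroup F] {f : E → F}
    (hf : Continuous f) : Integrable f ν := by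
  have := FiniteDimensional.proper_rclike ℂ E
  obtain ⟨C, hC⟩ := (isCompact_sphere (0 : E) 1).exists_bound_of_continuousOn hf.continuousOn
  refine .of_bound hf.aestronglyMeasurable C ?_
  filter_upwards [ae_norm_eq_one (ν := ν)] with x hx using hC x (by simpa using hx)

theorem exists_integral_inner_pow (k : ℕ) :
    ∃ c : ℂ, ∀ v : E, ∫ x, (⟪v, x⟫_ℂ * ⟪x, v⟫_ℂ) ^ k ∂ν = c * ⟪v, v⟫_ℂ ^ k := by
  obtain ⟨e, he⟩ := (ae_norm_eq_one (ν := ν)).exists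
  refine ⟨∫ x, (⟪e, x⟫_ℂ * ⟪x, e⟫_ℂ) ^ k ∂ν, fun v ↦ ?_⟩
  obtain ⟨U, hU⟩ := exists_linearIsometryEquiv_apply_eq (𝕜 := ℂ) (x := (‖v‖ : ℂ) • e) (y := v)
    (by simp [norm_smul, he])
  calc
    ∫ x, (⟪v, x⟫_ℂ * ⟪x, v⟫_ℂ) ^ k ∂ν
      = ∫ x, (⟪U ((‖v‖ : ℂ) • e), U x⟫_ℂ * ⟪U x, U ((‖v‖ : ℂ) • e)⟫_ℂ) ^ k ∂ν := by
      rw [hU, integral_comp_linearIsometryEquiv ν U fun x ↦ (⟪v, x⟫_ℂ * ⟪x, v⟫_ℂ) ^ k]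
    _ = ∫ x, (⟪e, x⟫_ℂ * ⟪x, e⟫_ℂ) ^ k * ⟪v, v⟫_ℂ ^ k ∂ν := by
      simp only [U.inner_map_map, inner_smul_left, inner_smul_right, Complex.conj_ofReal,
        inner_self_eq_norm_sq_to_K, Complex.coe_algebraMap]
      congr! 2
      ring
    _ = _ := integral_mul_const _ _

theorem exists_integral_inner_pow_mul_inner_pow (k : ℕ) :
    ∃ c : ℂ, ∀ u v : E, ∫ x, ⟪u, x⟫_ℂ ^ k * ⟪x, v⟫_ℂ ^ k ∂ν = c * ⟪u, v⟫_ℂ ^ k := by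
  obtain ⟨c, hc⟩ := exists_integral_inner_pow ν k
  refine ⟨c, fun u v ↦ ?_⟩
  let ζ := Complex.exp (2 * Real.pi * Complex.I / (2 * k + 1 : ℕ))
  have hζ : IsPrimitiveRoot ζ (2 * k + 1) := Complex.isPrimitiveRoot_exp _ (by omega)
  have hk : (2 * k + 1 : ℂ) ≠ 0 := by exact_mod_cast (2 * k).succ_ne_zero
  refine mul_left_cancel₀ hk ?_
  have pointwise (x : E) : (2 * k + 1) * (⟪u, x⟫_ℂ ^ k * ⟪x, v⟫_ℂ ^ k)
      = ∑ j ∈ range (2 * k + 1),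
          (ζ ^ j) ^ k * (⟪v + ζ ^ j • u, x⟫_ℂ * ⟪x, v + ζ ^ j • u⟫_ℂ) ^ k := by
    have h := sum_mul_inner_map_add_smul_pow hζ (InnerProductSpace.rankOne ℂ x x).toLinearMap u v
    simp only [ContinuousLinearMap.coe_coe, InnerProductSpace.inner_right_rankOne_apply] at h
    rw [← mul_pow, ← mul_comm ⟪x, v⟫_ℂ]
    simpa only [mul_pow, mul_comm] using h.symm
  have integrable_inner (w : E) : Integrable (fun x ↦ (⟪w, x⟫_ℂ * ⟪x, w⟫_ℂ) ^ k) ν :=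
    integrable_of_continuous (by fun_prop)
  calc
    (2 * k + 1) * ∫ x, ⟪u, x⟫_ℂ ^ k * ⟪x, v⟫_ℂ ^ k ∂ν
      = ∑ j ∈ range (2 * k + 1), (ζ ^ j) ^ k *
          ∫ x, (⟪v + ζ ^ j • u, x⟫_ℂ * ⟪x, v + ζ ^ j • u⟫_ℂ) ^ k ∂ν := by
      simp only [← integral_const_mul, pointwise]
      exact integral_finsetSum _ fun j _ ↦ (integrable_inner _).const_mul _
    _ = c * ∑ j ∈ range (2 * k + 1),
          (ζ ^ j * ⟪v + ζ ^ j • u, LinearMap.id (R := ℂ) (v + ζ ^ j • u)⟫_ℂ) ^ k := by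
      simp only [hc, mul_sum, LinearMap.id_apply]
      exact sum_congr rfl fun _ _ ↦ by ring
    _ = (2 * k + 1) * (c * ⟪u, v⟫_ℂ ^ k) := by
      rw [sum_mul_inner_map_add_smul_pow hζ]
      simp only [LinearMap.id_apply]
      ring

theorem exists_integral_prod_inner_mul_pow (ι : Type*) [Fintype ι] :
    ∃ c : ℂ, ∀ (p : ι → E) (v : E),
      ∫ x, (∏ i, ⟪p i, x⟫_ℂ) * ⟪x, v⟫_ℂ ^ Fintype.card ι ∂ν = c * ∏ i, ⟪p i, v⟫_ℂ := by
  classical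
  obtain ⟨c, hc⟩ := exists_integral_inner_pow_mul_inner_pow ν (Fintype.card ι)
  refine ⟨c, fun p v ↦ ?_⟩
  have polarize (x : E) : ((Fintype.card ι)! : ℂ) * ∏ i, ⟪p i, x⟫_ℂ
      = ∑ t : Finset ι, (-1) ^ #t * ⟪∑ i ∈ tᶜ, p i, x⟫_ℂ ^ Fintype.card ι := by
    simp only [factorial_card_mul_prod_eq_sum_neg_one_pow_card_mul_sum_pow, sum_inner]
  refine mul_left_cancel₀ (Nat.cast_ne_zero.2 (Fintype.card ι).factorial_ne_zero) ?_
  calc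
    ((Fintype.card ι)! : ℂ) * ∫ x, (∏ i, ⟪p i, x⟫_ℂ) * ⟪x, v⟫_ℂ ^ Fintype.card ι ∂ν
      = ∑ t : Finset ι, (-1) ^ #t *
          ∫ x, ⟪∑ i ∈ tᶜ, p i, x⟫_ℂ ^ Fintype.card ι * ⟪x, v⟫_ℂ ^ Fintype.card ι ∂ν := by
      simp only [← integral_const_mul, ← mul_assoc, polarize, sum_mul]
      exact integral_finsetSum _ fun t _ ↦ integrable_of_continuous (by fun_prop)
    _ = c * ∑ t : Finset ι, (-1) ^ #t * ⟪∑ i ∈ tᶜ, p i, v⟫_ℂ ^ Fintype.card ι := by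
      simp only [hc, mul_sum, mul_left_comm]
    _ = (Fintype.card ι)! * (c * ∏ i, ⟪p i, v⟫_ℂ) := by
      rw [← polarize, mul_left_comm]

theorem exists_integral_prod_inner_mul_prod_inner (ι : Type*) [Fintype ι] [DecidableEq ι] :
    ∃ c : ℂ, ∀ p q : ι → E,
      ∫ x, (∏ i, ⟪p i, x⟫_ℂ) * ∏ j, ⟪x, q j⟫_ℂ ∂ν
        = c * (of fun i j ↦ ⟪p i, q j⟫_ℂ).permanent := by
  obtain ⟨c, hc⟩ := exists_integral_prod_inner_mul_pow ν ι
  have hfac : ((Fintype.card ι)! : ℂ) ≠ 0 := Nat.cast_ne_zero.2 (Nat.factorial_ne_zero _)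
  refine ⟨c / (Fintype.card ι)!, fun p q ↦ mul_left_cancel₀ hfac ?_⟩
  have polarize (x : E) : ((Fintype.card ι)! : ℂ) * ∏ j, ⟪x, q j⟫_ℂ
      = ∑ t : Finset ι, (-1) ^ #t * ⟪x, ∑ j ∈ tᶜ, q j⟫_ℂ ^ Fintype.card ι := by
    simp only [factorial_card_mul_prod_eq_sum_neg_one_pow_card_mul_sum_pow, inner_sum]
  calc
    ((Fintype.card ι)! : ℂ) * ∫ x, (∏ i, ⟪p i, x⟫_ℂ) * ∏ j, ⟪x, q j⟫_ℂ ∂ν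
      = ∑ t : Finset ι, (-1) ^ #t *
          ∫ x, (∏ i, ⟪p i, x⟫_ℂ) * ⟪x, ∑ j ∈ tᶜ, q j⟫_ℂ ^ Fintype.card ι ∂ν := by
      simp only [← integral_const_mul, mul_left_comm _ (∏ i, ⟪p i, _⟫_ℂ), polarize, mul_sum]
      exact integral_finsetSum _ fun t _ ↦ integrable_of_continuous (by fun_prop)
    _ = c * (of fun i j ↦ ⟪p i, q j⟫_ℂ).permanent := by
      simp only [hc, permanent_eq_sum_neg_one_pow_card_mul_prod_sum_compl, of_apply, ← inner_sum,
        mul_sum, mul_left_comm]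
    _ = (Fintype.card ι)! * (c / (Fintype.card ι)! * (of fun i j ↦ ⟪p i, q j⟫_ℂ).permanent) := by
      field_simp

variable {n : Type*} [Fintype n] [DecidableEq n] (b : OrthonormalBasis n ℂ E)

theorem exists_integral_prod_inner_map (ι : Type*) [Fintype ι] [DecidableEq ι] :
    ∃ c : ℂ, ∀ T : ι → E →ₗ[ℂ] E,
      ∫ x, ∏ i, ⟪x, T i x⟫_ℂ ∂ν
        = c * ∑ σ : Perm ι, permTrace σ fun i ↦ LinearMap.toMatrixOrthonormal b (T i) := by
  obtain ⟨c, hc⟩ := exists_integral_prod_inner_mul_prod_inner ν ι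
  refine ⟨c, fun T ↦ ?_⟩
  have expand (x : E) : ∏ i, ⟪x, T i x⟫_ℂ
      = ∑ f : ι → n, (∏ i, ⟪(T i).adjoint (b (f i)), x⟫_ℂ) * ∏ i, ⟪x, b (f i)⟫_ℂ := by
    have parseval (i : ι) : ⟪x, T i x⟫_ℂ = ∑ j, ⟪(T i).adjoint (b j), x⟫_ℂ * ⟪x, b j⟫_ℂ := by
      simp only [LinearMap.adjoint_inner_left, ← b.sum_inner_mul_inner x (T i x), mul_comm]
    simp only [parseval, Fintype.prod_sum, prod_mul_distrib]
  calc
    ∫ x, ∏ i, ⟪x, T i x⟫_ℂ ∂ν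
      = ∑ f : ι → n, c * (of fun i j ↦ ⟪(T i).adjoint (b (f i)), b (f j)⟫_ℂ).permanent := by
      simp only [expand, ← hc]
      exact integral_finsetSum _ fun f _ ↦ integrable_of_continuous (by fun_prop)
    _ = c * ∑ σ : Perm ι, permTrace σ fun i ↦ LinearMap.toMatrixOrthonormal b (T i) := by
      rw [← mul_sum]
      simp only [permTrace, sum_comm (s := (univ : Finset (Perm ι)))]
      congr! 2 with f
      rw [← permanent_transpose]
      simp [permanent, LinearMap.adjoint_inner_left, LinearMap.toMatrixOrthonormal_apply_apply]

theorem integral_prod_inner_map {k : ℕ} (T : Fin k → E →ₗ[ℂ] E) :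
    ∫ x, ∏ i, ⟪x, T i x⟫_ℂ ∂ν
      = (∑ σ : Perm (Fin k), permTrace σ fun i ↦ LinearMap.toMatrixOrthonormal b (T i))
        / (Fintype.card n).ascFactorial k := by
  obtain ⟨c, hc⟩ := exists_integral_prod_inner_map ν b (Fin k)
  have normalization : c * (Fintype.card n).ascFactorial k = 1 := calc
    c * (Fintype.card n).ascFactorial k = ∫ x, ∏ _i : Fin k, ⟪x, LinearMap.id x⟫_ℂ ∂ν := by
      rw [hc, ← sum_permTrace_one]
      congr! with σ _
      exact (map_one (LinearMap.toMatrixOrthonormal b)).symm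
    _ = ∫ _, 1 ∂ν := by
      refine integral_congr_ae ?_
      filter_upwards [ae_norm_eq_one (ν := ν)] with x hx
      simp [inner_self_eq_norm_sq_to_K, hx]
    _ = 1 := by simp
  rw [hc, eq_div_iff (right_ne_zero_of_mul_eq_one normalization), mul_right_comm, normalization,
    one_mul]

end IsHaarPureState

section UnitaryGroup

variable {n : Type*} [Fintype n] [DecidableEq n] [MeasurableSpace (unitaryGroup n ℂ)]
  [BorelSpace (unitaryGroup n ℂ)] (μ : Measure (unitaryGroup n ℂ)) [IsProbabilityMeasure μ]
  [μ.IsMulLeftInvariant] {e₀ : n → ℂ}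

theorem measurable_toLp_mulVec (v : n → ℂ) :
    Measurable fun U : unitaryGroup n ℂ ↦ WithLp.toLp 2 ((U : Matrix n n ℂ) *ᵥ v) :=
  Continuous.measurable (by fun_prop)

theorem isHaarPureState_map_mulVec (he₀ : star e₀ ⬝ᵥ e₀ = 1) :
    IsHaarPureState
      (μ.map fun U : unitaryGroup n ℂ ↦ WithLp.toLp 2 ((U : Matrix n n ℂ) *ᵥ e₀)) := by
  have measurable_mulVec := measurable_toLp_mulVec e₀
  refine
    { toIsProbabilityMeasure := Measure.isProbabilityMeasure_map measurable_mulVec.aemeasurable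
      map_eq V := ?_
      ae_norm_eq_one := ?_ }
  · let b := EuclideanSpace.basisFun n ℂ
    let W : unitaryGroup n ℂ := ⟨_, V.toMatrix_mem_unitaryGroup b b⟩
    have apply_eq_mulVec (v : n → ℂ) : V (WithLp.toLp 2 v) = WithLp.toLp 2 (W.1 *ᵥ v) :=
      congrArg (WithLp.toLp 2)
        (LinearMap.toMatrix_mulVec_repr b.toBasis b.toBasis V.toLinearMap (WithLp.toLp 2 v)).symm
    have map_mulVec_eq_mul : V ∘ (fun U : unitaryGroup n ℂ ↦ WithLp.toLp 2 (U.1 *ᵥ e₀))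
        = (fun U : unitaryGroup n ℂ ↦ WithLp.toLp 2 (U.1 *ᵥ e₀)) ∘ (W * ·) := by
      ext1 U
      simp only [Function.comp_apply, apply_eq_mulVec, Submonoid.coe_mul, mulVec_mulVec]
    rw [Measure.map_map V.continuous.measurable measurable_mulVec, map_mulVec_eq_mul,
      ← Measure.map_map measurable_mulVec (measurable_const_mul W), map_mul_left_eq_self]
  · refine (ae_map_iff measurable_mulVec.aemeasurable
      (measurableSet_eq_fun measurable_norm measurable_const)).2 (ae_of_all _ fun U ↦ ?_)
    have inner_self : ⟪WithLp.toLp 2 (U.1 *ᵥ e₀), WithLp.toLp 2 (U.1 *ᵥ e₀)⟫_ℂ = 1 := by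
      rw [EuclideanSpace.inner_toLp_toLp, dotProduct_comm, star_mulVec, ← dotProduct_mulVec,
        mulVec_mulVec, ← star_eq_conjTranspose, Unitary.star_mul_self_of_mem U.2, one_mulVec, he₀]
    rw [norm_eq_sqrt_re_inner (𝕜 := ℂ), inner_self]
    simp

theorem stmt_13_general {k : ℕ} (A : Fin k → Matrix n n ℂ) (he₀ : star e₀ ⬝ᵥ e₀ = 1) :
    ∫ U : unitaryGroup n ℂ,
        ∏ i, star ((U : Matrix n n ℂ) *ᵥ e₀) ⬝ᵥ A i *ᵥ ((U : Matrix n n ℂ) *ᵥ e₀) ∂μ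
      = (∑ σ : Perm (Fin k), permTrace σ A) / (Fintype.card n).ascFactorial k := by
  have := isHaarPureState_map_mulVec μ he₀
  have toMatrix_toEuclideanLin (i : Fin k) :
      LinearMap.toMatrixOrthonormal (EuclideanSpace.basisFun n ℂ) (toEuclideanLin (A i)) = A i := by
    rw [toEuclideanLin_eq_toLin_orthonormal]
    exact LinearMap.toMatrix_toLin _ _ _
  have moment := IsHaarPureState.integral_prod_inner_map
    (μ.map fun U : unitaryGroup n ℂ ↦ WithLp.toLp 2 (U.1 *ᵥ e₀))
    (EuclideanSpace.basisFun n ℂ) (fun i ↦ toEuclideanLin (A i))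
  rw [integral_map (measurable_toLp_mulVec e₀).aemeasurable
    (Continuous.aestronglyMeasurable (by fun_prop))] at moment
  simpa only [toMatrix_toEuclideanLin, toLpLin_apply, EuclideanSpace.inner_toLp_toLp,
    dotProduct_comm (star _)] using moment

end UnitaryGroup

/-- Third moment of `⟨ψ|M|ψ⟩` for a Haar-random pure state `ψ = U e₀` in `ℂ^d`:
`E[⟨ψ|M|ψ⟩³] = ((Tr M)³ + 3·Tr(M²)·Tr M + 2·Tr(M³))/(d(d+1)(d+2))`.  The Haar probability measure on
`U(d)` is any left-invariant Borel probability measure. -/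
theorem stmt_13 (d : ℕ) (hd : 1 ≤ d) (M : Matrix (Fin d) (Fin d) ℂ)
    [MeasurableSpace (Matrix.unitaryGroup (Fin d) ℂ)]
    [BorelSpace (Matrix.unitaryGroup (Fin d) ℂ)]
    (μ : Measure (Matrix.unitaryGroup (Fin d) ℂ))
    [IsProbabilityMeasure μ] [μ.IsMulLeftInvariant]
    (e₀ : Fin d → ℂ) (he₀ : star e₀ ⬝ᵥ e₀ = 1) :
    (∫ U : Matrix.unitaryGroup (Fin d) ℂ,
        (star ((U : Matrix (Fin d) (Fin d) ℂ).mulVec e₀)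
          ⬝ᵥ M.mulVec ((U : Matrix (Fin d) (Fin d) ℂ).mulVec e₀)) ^ 3 ∂μ)
      = (M.trace ^ 3 + 3 * (M * M).trace * M.trace + 2 * (M * M * M).trace) / (d * (d + 1) * (d + 2)) := by
  have ascFactorial_three : (d.ascFactorial 3 : ℂ) = d * (d + 1) * (d + 2) := by
    push_cast [Nat.ascFactorial_succ, Nat.ascFactorial_zero]
    ring
  simpa only [sum_permTrace_fin_three, Fintype.card_fin, ascFactorial_three, prod_const, card_univ]
    using stmt_13_general μ (fun _ : Fin 3 ↦ M) he₀
end
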